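/- arXiv:1003.5176 — 5 statements merged into one kernel-verified Lean document; each statement's English description precedes it below -/
import Mathlib

section
/- Let X be a real Banach space whose dual X* contains a linear subspace A such that the weak* derived set A^(1) is a proper norm-dense subset of X*. Then X is not quasi-reflexive. -/
open NormedSpace

/-- The weak* derived set of a subset of the dual. -/
noncomputable def wStarDerived {X : Type*} [NormedAddCommGroup X] [NormedSpace ℝ X]
    (A : Set (StrongDual ℝ X)) : Set (StrongDual ℝ X) :=
  ⋃ n : ℕ, {f : StrongDual ℝ X |
    StrongDual.toWeakDual f ∈ closure (StrongDual.toWeakDual '' (A ∩ {g : StrongDual ℝ X | ‖g‖ ≤ n}))}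

/-- The weak* closure. -/
noncomputable def wStarClosure {X : Type*} [NormedAddCommGroup X] [NormedSpace ℝ X]
    (A : Set (StrongDual ℝ X)) : Set (StrongDual ℝ X) :=
  {f : StrongDual ℝ X | StrongDual.toWeakDual f ∈ closure (StrongDual.toWeakDual '' A)}

/-- Quasi-reflexivity. -/
def QuasiReflexive (X : Type*) [NormedAddCommGroup X] [NormedSpace ℝ X] : Prop :=
  FiniteDimensional ℝ
    (StrongDual ℝ (StrongDual ℝ X) ⧸ LinearMap.range ((inclusionInDoubleDual ℝ X) : X →ₗ[ℝ] StrongDual ℝ (StrongDual ℝ X)))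

/-- Restriction map to a subspace. -/
noncomputable def restrictMap {X : Type*} [NormedAddCommGroup X] [NormedSpace ℝ X]
    (Z : Submodule ℝ X) (f : StrongDual ℝ X) : StrongDual ℝ Z :=
  f.comp Z.subtypeL

/-!
Evaluation gives a map `X → A*`, the composition of the embedding `X → X**` with the restriction
`X** → A*`, which is onto by Hahn–Banach. If `X` is quasi-reflexive, the range of `X → A*` therefore
has finite codimension. If moreover `A` is weak* dense, then `X → A*` is injective, and an injective
operator between Banach spaces whose range has finite codimension is bounded below: `A` is norming.
By weak* separation a norming subspace `A` satisfies `A^(1) = X*`. Finally, norm density of `A^(1)`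
forces `A` to be weak* dense, because the weak* closure of `A` contains `A^(1)` and is norm closed.
-/

theorem cofg_map_of_surjective {R M N : Type*} [Ring R] [AddCommGroup M] [Module R M]
    [AddCommGroup N] [Module R N] {f : M →ₗ[R] N} (hf : Function.Surjective f)
    {p : Submodule R M} (hp : p.CoFG) : (p.map f).CoFG := by
  refine Module.Finite.of_surjective (p.mapQ (p.map f) f (Submodule.le_comap_map f p))
    (Function.Surjective.of_comp (g := p.mkQ) ?_)
  exact ((p.map f).mkQ_surjective).comp hf

theorem exists_norm_le_mul_of_injective_of_cofg_range {𝕜 E F : Type*}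
    [NontriviallyNormedField 𝕜] [CompleteSpace 𝕜]
    [NormedAddCommGroup E] [NormedSpace 𝕜 E] [CompleteSpace E]
    [NormedAddCommGroup F] [NormedSpace 𝕜 F] [CompleteSpace F]
    {f : E →L[𝕜] F} (hf : Function.Injective f) (hcofg : f.range.CoFG) :
    ∃ K : NNReal, ∀ x, ‖x‖ ≤ K * ‖f x‖ := by
  obtain ⟨G, hG⟩ := Submodule.exists_isCompl f.range
  have : FiniteDimensional 𝕜 G := .of_fg (hcofg.fg_of_isCompl hG)
  have hclosed : IsClosed (f.range : Set F) :=
    f.closed_complemented_range_of_isCompl_of_ker_eq_bot G hG G.closed_of_finiteDimensional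
      (LinearMap.ker_eq_bot.2 hf)
  obtain ⟨K, hK⟩ := f.antilipschitz_of_injective_of_isClosed_range hf hclosed
  exact ⟨K, f.bound_of_antilipschitz hK⟩

theorem precomp_subtypeL_surjective {𝕜 Y : Type*} [RCLike 𝕜] [NormedAddCommGroup Y]
    [NormedSpace 𝕜 Y] (p : Submodule 𝕜 Y) :
    Function.Surjective
      (ContinuousLinearMap.precomp 𝕜 p.subtypeL : StrongDual 𝕜 Y →L[𝕜] StrongDual 𝕜 p) :=
  fun g => by
    obtain ⟨h, hext, -⟩ := exists_extension_norm_eq p g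
    exact ⟨h, ContinuousLinearMap.ext hext⟩

theorem exists_norm_le_mul_precomp_subtypeL_comp {𝕜 E Y : Type*} [RCLike 𝕜]
    [NormedAddCommGroup E] [NormedSpace 𝕜 E] [CompleteSpace E]
    [NormedAddCommGroup Y] [NormedSpace 𝕜 Y] {J : E →L[𝕜] StrongDual 𝕜 Y} {p : Submodule 𝕜 Y}
    (hJ : J.range.CoFG) (hp : ∀ x, (∀ y ∈ p, J x y = 0) → x = 0) :
    ∃ K : NNReal, ∀ x,
      ‖x‖ ≤ K * ‖(ContinuousLinearMap.precomp 𝕜 p.subtypeL).comp J x‖ := by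
  have hinj : Function.Injective ((ContinuousLinearMap.precomp 𝕜 p.subtypeL).comp J) :=
    (injective_iff_map_eq_zero _).2 fun x hx =>
      hp x fun y hy => DFunLike.congr_fun hx (⟨y, hy⟩ : p)
  refine exists_norm_le_mul_of_injective_of_cofg_range hinj ?_
  have hrange : ((ContinuousLinearMap.precomp 𝕜 p.subtypeL).comp J).range =
      J.range.map (ContinuousLinearMap.precomp 𝕜 p.subtypeL).toLinearMap :=
    LinearMap.range_comp _ _
  rw [hrange]
  exact cofg_map_of_surjective (precomp_subtypeL_surjective p) hJ

theorem exists_forall_norm_le_mul_of_cofg_range {E Y : Type*}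
    [NormedAddCommGroup E] [NormedSpace ℝ E] [CompleteSpace E]
    [NormedAddCommGroup Y] [NormedSpace ℝ Y] {J : E →L[ℝ] StrongDual ℝ Y} {p : Submodule ℝ Y}
    (hJ : J.range.CoFG) (hp : ∀ x, (∀ y ∈ p, J x y = 0) → x = 0) :
    ∃ K : NNReal, ∀ x u, (∀ y ∈ p, ‖y‖ ≤ 1 → J x y ≤ u) → ‖x‖ ≤ K * u := by
  obtain ⟨K, hK⟩ := exists_norm_le_mul_precomp_subtypeL_comp hJ hp
  refine ⟨K, fun x u h => (hK x).trans ?_⟩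
  have hu : 0 ≤ u := by simpa using h 0 p.zero_mem (by simp)
  gcongr
  refine ContinuousLinearMap.opNorm_le_of_unit_norm hu fun y hy => abs_le'.2 ⟨?_, ?_⟩
  · exact h y y.2 hy.le
  · rw [← map_neg]
    exact h (-y : p) (-y).2 ((norm_neg y).trans hy).le

section WeakStar

variable {X : Type*} [NormedAddCommGroup X] [NormedSpace ℝ X]

theorem mem_wStarDerived_iff {s : Set (StrongDual ℝ X)} {f : StrongDual ℝ X} :
    f ∈ wStarDerived s ↔ ∃ n : ℕ, f ∈ wStarClosure (s ∩ {g | ‖g‖ ≤ n}) :=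
  Set.mem_iUnion

theorem wStarClosure_mono {s t : Set (StrongDual ℝ X)} (h : s ⊆ t) :
    wStarClosure s ⊆ wStarClosure t :=
  fun _ hf => closure_mono (X := WeakDual ℝ X) (Set.image_mono h) hf

theorem isClosed_wStarClosure (s : Set (StrongDual ℝ X)) : IsClosed (wStarClosure s) :=
  IsClosed.preimage NormedSpace.Dual.toWeakDual_continuous
    (isClosed_closure (X := WeakDual ℝ X))

theorem wStarDerived_subset_wStarClosure (s : Set (StrongDual ℝ X)) :
    wStarDerived s ⊆ wStarClosure s := fun _ hf => by
  obtain ⟨n, hn⟩ := mem_wStarDerived_iff.1 hf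
  exact wStarClosure_mono Set.inter_subset_left hn

theorem wStarClosure_eq_univ_of_dense_wStarDerived {s : Set (StrongDual ℝ X)}
    (hs : Dense (wStarDerived s)) : wStarClosure s = Set.univ :=
  (isClosed_wStarClosure s).closure_eq ▸ (hs.mono (wStarDerived_subset_wStarClosure s)).closure_eq

theorem exists_lt_of_notMem_wStarClosure {s : Set (StrongDual ℝ X)} (hs : Convex ℝ s)
    {f : StrongDual ℝ X} (hf : f ∉ wStarClosure s) :
    ∃ (x : X) (u : ℝ), (∀ g ∈ s, g x < u) ∧ u < f x := by
  have : LocallyConvexSpace ℝ (WeakDual ℝ X) :=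
    WeakBilin.locallyConvexSpace (B := topDualPairing ℝ X)
  have hconv : Convex ℝ (closure (StrongDual.toWeakDual '' s)) :=
    (hs.linear_image (StrongDual.toWeakDual (𝕜 := ℝ) (E := X)).toLinearMap).closure
  obtain ⟨φ, u, hlt, hgt⟩ := geometric_hahn_banach_closed_point hconv isClosed_closure hf
  obtain ⟨x, rfl⟩ := LinearMap.dualEmbedding_surjective (topDualPairing ℝ X) φ
  exact ⟨x, u, fun g hg => hlt _ (subset_closure (Set.mem_image_of_mem _ hg)), hgt⟩

theorem eq_zero_of_wStarClosure_eq_univ {s : Set (StrongDual ℝ X)}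
    (hs : wStarClosure s = Set.univ) {x : X} (hx : ∀ f ∈ s, f x = 0) : x = 0 := by
  refine SeparatingDual.eq_zero_of_forall_dual_eq_zero (R := ℝ) fun f => ?_
  have hclosed : IsClosed {g : WeakDual ℝ X | g x = 0} :=
    isClosed_eq (WeakDual.eval_continuous x) continuous_const
  have hsub : StrongDual.toWeakDual '' s ⊆ {g | g x = 0} := Set.image_subset_iff.2 hx
  have hf : f ∈ wStarClosure s := hs ▸ Set.mem_univ f
  exact closure_minimal hsub hclosed hf

end WeakStar

section Norming

variable {X : Type*} [NormedAddCommGroup X] [NormedSpace ℝ X]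

/-- `A` is a norming subspace of the dual, with constant `K`: `‖x‖ ≤ K * sup {a x | a ∈ A, ‖a‖ ≤ 1}`
for all `x`. The supremum is expressed through its upper bounds `u`. -/
def IsNorming (K : NNReal) (A : Submodule ℝ (StrongDual ℝ X)) : Prop :=
  ∀ (x : X) (u : ℝ), (∀ a ∈ A, ‖a‖ ≤ 1 → a x ≤ u) → ‖x‖ ≤ K * u

theorem QuasiReflexive.exists_isNorming [CompleteSpace X] (hX : QuasiReflexive X)
    {A : Submodule ℝ (StrongDual ℝ X)}
    (hA : wStarClosure (A : Set (StrongDual ℝ X)) = Set.univ) : ∃ K, IsNorming K A :=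
  exists_forall_norm_le_mul_of_cofg_range (J := inclusionInDoubleDual ℝ X) hX
    fun _ hx => eq_zero_of_wStarClosure_eq_univ hA hx

variable {A : Submodule ℝ (StrongDual ℝ X)} {K : NNReal}

theorem IsNorming.mem_wStarClosure_inter (hA : IsNorming K A) {f : StrongDual ℝ X} {r : ℝ}
    (hr₀ : 0 < r) (hr : ‖f‖ * K ≤ r) :
    f ∈ wStarClosure ((A : Set (StrongDual ℝ X)) ∩ {g | ‖g‖ ≤ r}) := by
  by_contra hf
  have hconv : Convex ℝ ((A : Set (StrongDual ℝ X)) ∩ {g | ‖g‖ ≤ r}) :=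
    A.convex.inter (by simpa using convexOn_univ_norm.convex_le r)
  obtain ⟨x, u, hlt, hgt⟩ := exists_lt_of_notMem_wStarClosure hconv hf
  have hu : 0 < u := by simpa using hlt 0 ⟨A.zero_mem, by simpa using hr₀.le⟩
  have hx : ‖x‖ ≤ K * (u / r) := by
    refine hA x _ fun a ha ha₁ => (le_div_iff₀' hr₀).2 (hlt (r • a) ⟨A.smul_mem r ha, ?_⟩).le
    calc ‖r • a‖ = r * ‖a‖ := norm_smul_of_nonneg hr₀.le a
      _ ≤ r := mul_le_of_le_one_right hr₀.le ha₁
  have hle : f x ≤ u := calc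
    f x ≤ ‖f‖ * ‖x‖ := (le_abs_self _).trans (f.le_opNorm x)
    _ ≤ ‖f‖ * (K * (u / r)) := by gcongr
    _ = ‖f‖ * K * (u / r) := (mul_assoc _ _ _).symm
    _ ≤ r * (u / r) := by gcongr
    _ = u := mul_div_cancel₀ u hr₀.ne'
  exact hle.not_gt hgt

theorem IsNorming.wStarDerived_eq_univ (hA : IsNorming K A) :
    wStarDerived (A : Set (StrongDual ℝ X)) = Set.univ := by
  refine Set.eq_univ_of_forall fun f => mem_wStarDerived_iff.2 ?_
  obtain ⟨n, hn⟩ := exists_nat_gt (‖f‖ * K)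
  exact ⟨n, hA.mem_wStarClosure_inter (lt_of_le_of_lt (by positivity) hn) hn.le⟩

end Norming

theorem stmt0_general (X : Type*) [NormedAddCommGroup X] [NormedSpace ℝ X] [CompleteSpace X]
    (A : Submodule ℝ (StrongDual ℝ X))
    (hproper : wStarDerived (A : Set (StrongDual ℝ X)) ≠ Set.univ)
    (hdense : wStarClosure (A : Set (StrongDual ℝ X)) = Set.univ) :
    ¬ QuasiReflexive X := by
  intro hX
  obtain ⟨K, hK⟩ := hX.exists_isNorming hdense
  exact hproper hK.wStarDerived_eq_univ

/-- If the dual of a Banach space $X$ contains a linear subspace $A$ whose weak* derived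
set $A^{(1)}$ is a proper norm-dense subset of $X^*$, then $X$ is not quasi-reflexive. -/
theorem stmt0 (X : Type*) [NormedAddCommGroup X] [NormedSpace ℝ X] [CompleteSpace X]
    (A : Submodule ℝ (StrongDual ℝ X))
    (hproper : wStarDerived (A : Set (StrongDual ℝ X)) ≠ Set.univ)
    (hdense : Dense (wStarDerived (A : Set (StrongDual ℝ X)))) :
    ¬ QuasiReflexive X := by
  exact stmt0_general X A hproper (wStarClosure_eq_univ_of_dense_wStarDerived hdense)
end

section
/- Let X be a real Banach space whose dual X* contains a linear subspace A such that the weak* derived set A^(1) is a proper norm-dense subset of X*. Then X contains an infinite-dimensional closed subspace whose dual is separable. -/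
/-!
Let `p x = sup {|g x| : g ∈ A, ‖g‖ ≤ 1}`. By the bipolar theorem `A^(1)` consists of the functionals
bounded by a multiple of `p`; so `A^(1) ≠ X*` says that no multiple of `p` dominates the norm, and
density of `A^(1)` makes every functional small, relative to the norm, wherever `p` is small.
Consequently no multiple of `p` dominates the norm on a finite intersection of kernels of
functionals either, and one can select unit vectors `x n` in such intersections with
`p (x n) ≤ 4⁻ⁿ`, together with biorthogonal functionals `a n` with `‖a n‖ ≤ 2ⁿ`. On the closed span
of the `x n`, every `f ∈ A^(1)` agrees with the norm convergent series `∑ f (x n) • a n`, so the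
`a n` span a dense subspace of its dual.
-/

open NormedSpace

open scoped NNReal

section Dominated

variable {𝕜 E : Type*} [NontriviallyNormedField 𝕜] [SeminormedAddCommGroup E] [NormedSpace 𝕜 E]

/-- The norm continuous functionals that are also continuous for the seminorm `p`, that is, bounded
by a multiple of `p`. -/
def dominatedFunctionals (p : Seminorm 𝕜 E) : Set (StrongDual 𝕜 E) :=
  {f | ∃ C : ℝ≥0, ∀ x, ‖f x‖ ≤ C * p x}

variable {p : Seminorm 𝕜 E}

lemma exists_norm_apply_le_add_of_dense (hp : Dense (dominatedFunctionals p)) (φ : StrongDual 𝕜 E)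
    {δ : ℝ} (hδ : 0 < δ) : ∃ C : ℝ≥0, ∀ x, ‖φ x‖ ≤ C * p x + δ * ‖x‖ := by
  obtain ⟨f, ⟨C, hC⟩, hf⟩ := hp.exists_dist_lt φ hδ
  refine ⟨C, fun x ↦ ?_⟩
  calc ‖φ x‖ = ‖f x + (φ - f) x‖ := by simp
    _ ≤ ‖f x‖ + ‖(φ - f) x‖ := norm_add_le _ _
    _ ≤ C * p x + δ * ‖x‖ :=
      add_le_add (hC x) ((φ - f).le_of_opNorm_le (dist_eq_norm φ f ▸ hf.le) x)

lemma exists_norm_le_mul_add_of_inf_ker (φ : StrongDual 𝕜 E) {Y : Submodule 𝕜 E} {K : ℝ≥0}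
    (hK : ∀ x ∈ Y, φ x = 0 → ‖x‖ ≤ K * p x) :
    ∃ M : ℝ≥0, ∀ x ∈ Y, ‖x‖ ≤ K * p x + M * ‖φ x‖ := by
  by_cases hφ : ∀ x ∈ Y, φ x = 0
  · exact ⟨0, fun x hx ↦ by simpa using hK x hx (hφ x hx)⟩
  push Not at hφ
  obtain ⟨e, heY, he⟩ := hφ
  refine ⟨(K * ⟨p e, apply_nonneg p e⟩ + ‖e‖₊) / ‖φ e‖₊, fun x hx ↦ ?_⟩
  set t := φ x / φ e with ht
  have hker : φ (x - t • e) = 0 := by simp [ht, he]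
  have hx' := hK (x - t • e) (Y.sub_mem hx (Y.smul_mem t heY)) hker
  have hpx : p (x - t • e) ≤ p x + ‖t‖ * p e := by
    simpa [map_smul_eq_mul] using map_sub_le_add p x (t • e)
  calc ‖x‖ ≤ ‖x - t • e‖ + ‖t • e‖ := by simpa using norm_add_le (x - t • e) (t • e)
    _ ≤ K * (p x + ‖t‖ * p e) + ‖t‖ * ‖e‖ := by
      rw [norm_smul]
      gcongr
      exact hx'.trans (by gcongr)
    _ = K * p x + (K * p e + ‖e‖) / ‖φ e‖ * ‖φ x‖ := by rw [ht, norm_div]; ring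

lemma exists_norm_le_mul_of_inf_ker (hp : Dense (dominatedFunctionals p)) (φ : StrongDual 𝕜 E)
    {Y : Submodule 𝕜 E} {K : ℝ≥0} (hK : ∀ x ∈ Y, φ x = 0 → ‖x‖ ≤ K * p x) :
    ∃ K' : ℝ≥0, ∀ x ∈ Y, ‖x‖ ≤ K' * p x := by
  obtain ⟨M, hM⟩ := exists_norm_le_mul_add_of_inf_ker φ hK
  obtain ⟨C, hC⟩ := exists_norm_apply_le_add_of_dense hp φ (δ := 1 / (2 * (M + 1))) (by positivity)
  refine ⟨2 * (K + M * C), fun x hx ↦ ?_⟩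
  have hδ : M * (1 / (2 * (M + 1)) * ‖x‖) ≤ ‖x‖ / 2 := by
    field_simp
    linarith [norm_nonneg x]
  have hφ : M * ‖φ x‖ ≤ M * (C * p x + 1 / (2 * (M + 1)) * ‖x‖) := by gcongr; exact hC x
  push_cast
  linarith [hM x hx]

lemma exists_norm_le_mul_of_iInf_ker (hp : Dense (dominatedFunctionals p))
    (s : Finset (StrongDual 𝕜 E)) {K : ℝ≥0}
    (hK : ∀ x, (∀ φ ∈ s, φ x = 0) → ‖x‖ ≤ K * p x) :
    ∃ K' : ℝ≥0, ∀ x, ‖x‖ ≤ K' * p x := by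
  classical
  induction s using Finset.induction_on generalizing K with
  | empty => exact ⟨K, fun x ↦ hK x (by simp)⟩
  | insert φ s _ ih =>
    have hmem (x : E) : x ∈ ⨅ ψ ∈ s, ψ.ker ↔ ∀ ψ ∈ s, ψ x = 0 := by simp [Submodule.mem_iInf]
    obtain ⟨K', hK'⟩ := exists_norm_le_mul_of_inf_ker hp φ (Y := ⨅ ψ ∈ s, ψ.ker) fun x hxs hφ ↦
      hK x (Finset.forall_mem_insert .. |>.2 ⟨hφ, (hmem x).1 hxs⟩)
    exact ih fun x hx ↦ hK' x ((hmem x).2 hx)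

lemma summable_apply_smul_of_mem_dominatedFunctionals [CompleteSpace 𝕜] {x : ℕ → E}
    {a : ℕ → StrongDual 𝕜 E} (hx : ∀ n, p (x n) ≤ (1 / 4) ^ n) (ha : ∀ n, ‖a n‖ ≤ 2 ^ n)
    {f : StrongDual 𝕜 E} (hf : f ∈ dominatedFunctionals p) : Summable fun n ↦ f (x n) • a n := by
  obtain ⟨C, hC⟩ := hf
  refine .of_norm_bounded (summable_geometric_two.mul_left (C : ℝ)) fun n ↦ ?_
  calc ‖f (x n) • a n‖ = ‖f (x n)‖ * ‖a n‖ := norm_smul _ _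
    _ ≤ C * (1 / 4) ^ n * 2 ^ n := by
      gcongr
      exacts [(hC _).trans (by gcongr; exact hx n), ha n]
    _ = C * (1 / 2) ^ n := by rw [mul_assoc, ← mul_pow]; norm_num

end Dominated

section Biorthogonal

variable {𝕜 E : Type*} [NontriviallyNormedField 𝕜] [SeminormedAddCommGroup E] [NormedSpace 𝕜 E]

/-- The Gaussian elimination operators of a triangular system `(x, ψ)`: `elimination x ψ n`
eliminates `x 0, …, x (n - 1)` in turn, the step for `x i` being `y ↦ y - ψ i y • x i`. The
functionals `ψ n ∘ elimination x ψ n` are then biorthogonal to `x`. -/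
noncomputable def elimination (x : ℕ → E) (ψ : ℕ → StrongDual 𝕜 E) : ℕ → E →L[𝕜] E
  | 0 => .id 𝕜 E
  | n + 1 => (.id 𝕜 E - (ψ n).smulRight (x n)) ∘L elimination x ψ n

variable {x : ℕ → E} {ψ : ℕ → StrongDual 𝕜 E}

lemma elimination_succ_apply (n : ℕ) (y : E) :
    elimination x ψ (n + 1) y = elimination x ψ n y - ψ n (elimination x ψ n y) • x n := rfl

lemma norm_elimination_le (hx : ∀ n, ‖x n‖ ≤ 1) (hψ : ∀ n, ‖ψ n‖ ≤ 1) (n : ℕ) :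
    ‖elimination x ψ n‖ ≤ 2 ^ n := by
  induction n with
  | zero => simpa [elimination] using ContinuousLinearMap.norm_id_le (𝕜 := 𝕜) (E := E)
  | succ n ih =>
    have hstep : ‖.id 𝕜 E - (ψ n).smulRight (x n)‖ ≤ 2 := calc
      _ ≤ ‖ContinuousLinearMap.id 𝕜 E‖ + ‖ψ n‖ * ‖x n‖ := by
        simpa using norm_sub_le (ContinuousLinearMap.id 𝕜 E) ((ψ n).smulRight (x n))
      _ ≤ 1 + 1 * 1 := by
        gcongr
        exacts [ContinuousLinearMap.norm_id_le, hψ n, hx n]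
      _ = 2 := by norm_num
    calc ‖elimination x ψ (n + 1)‖ ≤ 2 * 2 ^ n :=
          (ContinuousLinearMap.opNorm_comp_le _ _).trans (by gcongr)
      _ = 2 ^ (n + 1) := by ring

lemma elimination_apply_of_le (h0 : ∀ m n, m < n → ψ m (x n) = 0) {n m : ℕ} (hnm : n ≤ m) :
    elimination x ψ n (x m) = x m := by
  induction n with
  | zero => rfl
  | succ n ih => rw [elimination_succ_apply, ih (by lia), h0 n m hnm, zero_smul, sub_zero]

lemma elimination_apply_of_lt (h0 : ∀ m n, m < n → ψ m (x n) = 0) (h1 : ∀ n, ψ n (x n) = 1)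
    {n m : ℕ} (hmn : m < n) : elimination x ψ n (x m) = 0 := by
  induction n, hmn using Nat.le_induction with
  | base => rw [elimination_succ_apply, elimination_apply_of_le h0 le_rfl, h1, one_smul, sub_self]
  | succ n _ ih => rw [elimination_succ_apply, ih, map_zero, zero_smul, sub_zero]

lemma exists_biorthogonal_of_triangular (hx : ∀ n, ‖x n‖ ≤ 1) (hψ : ∀ n, ‖ψ n‖ ≤ 1)
    (h0 : ∀ m n, m < n → ψ m (x n) = 0) (h1 : ∀ n, ψ n (x n) = 1) :
    ∃ a : ℕ → StrongDual 𝕜 E, (∀ n, ‖a n‖ ≤ 2 ^ n) ∧ ∀ n m, a n (x m) = if n = m then 1 else 0 := by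
  refine ⟨fun n ↦ ψ n ∘L elimination x ψ n, fun n ↦ ?_, fun n m ↦ ?_⟩
  · calc ‖ψ n ∘L elimination x ψ n‖ ≤ ‖ψ n‖ * ‖elimination x ψ n‖ :=
          ContinuousLinearMap.opNorm_comp_le _ _
      _ ≤ 1 * 2 ^ n := by gcongr; exacts [hψ n, norm_elimination_le hx hψ n]
      _ = 2 ^ n := one_mul _
  · rw [ContinuousLinearMap.comp_apply]
    rcases lt_trichotomy n m with h | rfl | h
    · rw [elimination_apply_of_le h0 h.le, h0 n m h, if_neg h.ne]
    · rw [elimination_apply_of_le h0 le_rfl, h1, if_pos rfl]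
    · rw [elimination_apply_of_lt h0 h1 h, map_zero, if_neg h.ne']

lemma hasSum_apply_smul_eqOn_closure_span {ι : Type*} [DecidableEq ι] {x : ι → E}
    {a : ι → StrongDual 𝕜 E}
    (hax : ∀ i j, a i (x j) = if i = j then 1 else 0) {f g : StrongDual 𝕜 E}
    (hg : HasSum (fun i ↦ f (x i) • a i) g) :
    Set.EqOn g f (closure (Submodule.span 𝕜 (Set.range x))) := by
  refine ContinuousLinearMap.eqOn_closure_span (Set.forall_mem_range.2 fun j ↦ ?_)
  have hgx : HasSum (fun i ↦ f (x i) * a i (x j)) (g (x j)) := by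
    simpa using hg.mapL (ContinuousLinearMap.apply 𝕜 𝕜 (x j))
  have hfx : HasSum (fun i ↦ f (x i) * a i (x j)) (f (x j)) := by
    simpa [hax] using hasSum_single (f := fun i ↦ f (x i) * a i (x j)) j
      fun i hi ↦ by simp [hax, hi]
  exact hgx.unique hfx

end Biorthogonal

section RCLike

variable {𝕜 E : Type*} [RCLike 𝕜]

section Separable

variable [SeminormedAddCommGroup E] [NormedSpace 𝕜 E]

lemma surjective_precomp_subtypeL (Z : Submodule 𝕜 E) :
    Function.Surjective (Z.subtypeL.precomp 𝕜 : StrongDual 𝕜 E →L[𝕜] StrongDual 𝕜 Z) := by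
  intro g
  obtain ⟨f, hf, _⟩ := exists_extension_norm_eq Z g
  exact ⟨f, ContinuousLinearMap.ext hf⟩

lemma separableSpace_dual_of_dense_summable {ι : Type*} [DecidableEq ι] [Countable ι] {x : ι → E}
    {a : ι → StrongDual 𝕜 E} (hax : ∀ i j, a i (x j) = if i = j then 1 else 0)
    {D : Set (StrongDual 𝕜 E)} (hD : Dense D) (hsum : ∀ f ∈ D, Summable fun i ↦ f (x i) • a i) :
    TopologicalSpace.SeparableSpace
      (StrongDual 𝕜 (Submodule.span 𝕜 (Set.range x)).topologicalClosure) := by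
  set Z := (Submodule.span 𝕜 (Set.range x)).topologicalClosure
  let R : StrongDual 𝕜 E →L[𝕜] StrongDual 𝕜 Z := Z.subtypeL.precomp 𝕜
  let S : Submodule 𝕜 (StrongDual 𝕜 Z) := Submodule.span 𝕜 (Set.range fun i ↦ R (a i))
  have hRD : R '' D ⊆ closure S := by
    rintro _ ⟨f, hf, rfl⟩
    obtain ⟨g, hg⟩ := hsum f hf
    have hfg : R f = R g :=
      ContinuousLinearMap.ext fun z ↦ (hasSum_apply_smul_eqOn_closure_span hax hg z.2).symm
    rw [hfg]
    refine mem_closure_of_tendsto (R.hasSum hg) (.of_forall fun s ↦ S.sum_mem fun i _ ↦ ?_)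
    rw [map_smul]
    exact S.smul_mem _ (Submodule.subset_span ⟨i, rfl⟩)
  have hS : Dense (S : Set (StrongDual 𝕜 Z)) := dense_closure.1 <|
    ((surjective_precomp_subtypeL Z).denseRange.dense_image R.continuous hD).mono hRD
  rw [← TopologicalSpace.isSeparable_univ_iff, ← hS.closure_eq]
  exact (Set.countable_range fun i ↦ R (a i)).isSeparable.span.closure

end Separable

variable [NormedAddCommGroup E] [NormedSpace 𝕜 E] {p : Seminorm 𝕜 E}

lemma exists_norm_eq_one_apply_le (hp : Dense (dominatedFunctionals p))
    (hp' : ∀ K : ℝ≥0, ∃ x, K * p x < ‖x‖) (s : Finset (StrongDual 𝕜 E)) {ε : ℝ≥0} (hε : 0 < ε) :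
    ∃ x, ‖x‖ = 1 ∧ p x ≤ ε ∧ ∀ φ ∈ s, φ x = 0 := by
  by_contra! hcon
  have hker (x : E) (hx : ∀ φ ∈ s, φ x = 0) : ‖x‖ ≤ ↑ε⁻¹ * p x := by
    rcases eq_or_ne x 0 with rfl | hx0
    · simp
    by_contra! hlt
    obtain ⟨φ, hφ, hne⟩ := hcon ((‖x‖⁻¹ : 𝕜) • x) (norm_smul_inv_norm hx0) <| by
      have hpos : 0 < ‖x‖ := norm_pos_iff.2 hx0
      rw [map_smul_eq_mul, norm_inv, RCLike.norm_coe_norm, inv_mul_le_iff₀ hpos]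
      rw [NNReal.coe_inv, inv_mul_lt_iff₀ (NNReal.coe_pos.2 hε)] at hlt
      linarith
    exact hne (by simp [hx φ hφ])
  obtain ⟨K, hK⟩ := exists_norm_le_mul_of_iInf_ker hp s hker
  obtain ⟨x, hx⟩ := hp' K
  exact (hK x).not_gt hx

lemma exists_triangular_seq_apply_le (hp : Dense (dominatedFunctionals p))
    (hp' : ∀ K : ℝ≥0, ∃ x, K * p x < ‖x‖) :
    ∃ (x : ℕ → E) (ψ : ℕ → StrongDual 𝕜 E), (∀ n, ‖x n‖ = 1) ∧ (∀ n, p (x n) ≤ (1 / 4) ^ n) ∧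
      (∀ n, ‖ψ n‖ ≤ 1) ∧ (∀ m n, m < n → ψ m (x n) = 0) ∧ ∀ n, ψ n (x n) = 1 := by
  classical
  -- The first component is an exponent; it increases along the sequence, hence dominates the index.
  obtain ⟨u, hu, hu'⟩ := exists_seq_of_forall_finset_exists (α := ℕ × E × StrongDual 𝕜 E)
    (fun (k, x, ψ) ↦ ‖x‖ = 1 ∧ p x ≤ (1 / 4) ^ k ∧ ‖ψ‖ ≤ 1 ∧ ψ x = 1)
    (fun (k, _, ψ) (l, y, _) ↦ k < l ∧ ψ y = 0) fun s _ ↦ by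
      set k := s.sup Prod.fst + 1
      obtain ⟨x, hx, hpx, hsx⟩ := exists_norm_eq_one_apply_le hp hp'
        (s.image fun q ↦ q.2.2) (ε := (1 / 4) ^ k) (by positivity)
      obtain ⟨ψ, hψ, hψx⟩ := exists_dual_vector'' 𝕜 x
      refine ⟨(k, x, ψ), ⟨hx, by simpa using hpx, hψ, by simpa [hx] using hψx⟩, fun q hq ↦ ⟨?_, ?_⟩⟩
      · exact Nat.lt_succ_of_le (Finset.le_sup (f := Prod.fst) hq)
      · exact hsx _ (Finset.mem_image_of_mem _ hq)
  have hmono : StrictMono fun n ↦ (u n).1 := fun m n hmn ↦ (hu' m n hmn).1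
  refine ⟨fun n ↦ (u n).2.1, fun n ↦ (u n).2.2, fun n ↦ (hu n).1, fun n ↦ ?_,
    fun n ↦ (hu n).2.2.1, fun m n hmn ↦ (hu' m n hmn).2, fun n ↦ (hu n).2.2.2⟩
  exact (hu n).2.1.trans (pow_le_pow_of_le_one (by norm_num) (by norm_num) hmono.le_apply)

theorem exists_isClosed_separableSpace_dual_of_dense_dominatedFunctionals
    (hp : Dense (dominatedFunctionals p)) (hp' : ∀ K : ℝ≥0, ∃ x, K * p x < ‖x‖) :
    ∃ Z : Submodule 𝕜 E, IsClosed (Z : Set E) ∧ ¬ FiniteDimensional 𝕜 Z ∧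
      TopologicalSpace.SeparableSpace (StrongDual 𝕜 Z) := by
  obtain ⟨x, ψ, hx, hpx, hψ, h0, h1⟩ := exists_triangular_seq_apply_le hp hp'
  obtain ⟨a, ha, hax⟩ := exists_biorthogonal_of_triangular (fun n ↦ (hx n).le) hψ h0 h1
  refine ⟨(Submodule.span 𝕜 (Set.range x)).topologicalClosure,
    Submodule.isClosed_topologicalClosure _, fun _ ↦ ?_,
    separableSpace_dual_of_dense_summable hax hp fun f hf ↦
      summable_apply_smul_of_mem_dominatedFunctionals hpx ha hf⟩
  have hli : LinearIndependent 𝕜 x :=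
    .of_pairwise_dual_eq_zero_one x (fun n ↦ (a n : E →ₗ[𝕜] 𝕜))
      (fun n m hnm ↦ by simp [hax, hnm]) fun n ↦ by simp [hax]
  have := Submodule.finiteDimensional_of_le
    (Submodule.le_topologicalClosure (Submodule.span 𝕜 (Set.range x)))
  have := (linearIndependent_span hli).finite
  exact not_finite ℕ

end RCLike

section WeakStar

variable {X : Type*} [NormedAddCommGroup X] [NormedSpace ℝ X] {A : Submodule ℝ (StrongDual ℝ X)}

/-- The seminorm `x ↦ sup {|g x| : g ∈ A, ‖g‖ ≤ 1}`, which is the norm when `A` is `1`-norming. -/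
noncomputable def evalSeminorm (A : Submodule ℝ (StrongDual ℝ X)) : Seminorm ℝ X :=
  ⨆ g : {g : StrongDual ℝ X // g ∈ A ∧ ‖g‖ ≤ 1}, (g.1 : X →ₗ[ℝ] ℝ).toSeminorm

-- The supremum of an unbounded family of seminorms is `0`, hence the need for this bound.
lemma bddAbove_range_toSeminorm (A : Submodule ℝ (StrongDual ℝ X)) :
    BddAbove (Set.range fun g : {g : StrongDual ℝ X // g ∈ A ∧ ‖g‖ ≤ 1} ↦
      (g.1 : X →ₗ[ℝ] ℝ).toSeminorm) :=
  ⟨normSeminorm ℝ X, Set.forall_mem_range.2 fun g x ↦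
    (g.1.le_of_opNorm_le g.2.2 x).trans (one_mul _).le⟩

lemma norm_apply_le_norm_mul_evalSeminorm {g : StrongDual ℝ X} (hg : g ∈ A) (x : X) :
    ‖g x‖ ≤ ‖g‖ * evalSeminorm A x := by
  rcases eq_or_ne g 0 with rfl | hg0
  · simp
  have hpos : 0 < ‖g‖ := norm_pos_iff.2 hg0
  have hle : ‖(‖g‖⁻¹ • g) x‖ ≤ evalSeminorm A x :=
    le_ciSup (bddAbove_range_toSeminorm A)
      ⟨‖g‖⁻¹ • g, A.smul_mem _ hg, (norm_smul_inv_norm (𝕜 := ℝ) hg0).le⟩ x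
  rwa [smul_apply, norm_smul, norm_inv, norm_norm, inv_mul_le_iff₀ hpos] at hle

lemma evalSeminorm_le {x : X} {u : ℝ} (hu : ∀ g ∈ A, ‖g‖ ≤ 1 → ‖g x‖ ≤ u) :
    evalSeminorm A x ≤ u := by
  have : Nonempty {g : StrongDual ℝ X // g ∈ A ∧ ‖g‖ ≤ 1} := ⟨0, A.zero_mem, by simp⟩
  rw [evalSeminorm, Seminorm.iSup_apply (bddAbove_range_toSeminorm A)]
  exact ciSup_le fun g ↦ hu g.1 g.2.1 g.2.2

lemma norm_apply_le_of_mem_wStarClosure {r : ℝ} {f : StrongDual ℝ X}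
    (hf : f ∈ wStarClosure ((A : Set (StrongDual ℝ X)) ∩ {g | ‖g‖ ≤ r})) (x : X) :
    ‖f x‖ ≤ r * evalSeminorm A x := by
  have hclosed : IsClosed {g : WeakDual ℝ X | ‖g x‖ ≤ r * evalSeminorm A x} :=
    isClosed_le (WeakDual.eval_continuous x).norm continuous_const
  refine closure_minimal ?_ hclosed hf
  rintro _ ⟨g, ⟨hgA, hgr⟩, rfl⟩
  exact (norm_apply_le_norm_mul_evalSeminorm hgA x).trans (by gcongr; exact hgr)

lemma exists_forall_apply_lt_of_notMem_wStarClosure {S : Set (StrongDual ℝ X)} (hS : Convex ℝ S)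
    {f : StrongDual ℝ X} (hf : f ∉ wStarClosure S) :
    ∃ (x : X) (u : ℝ), (∀ g ∈ S, g x < u) ∧ u < f x := by
  have : LocallyConvexSpace ℝ (WeakDual ℝ X) :=
    (WeakDual.withSeminorms ℝ X).toLocallyConvexSpace
  have hconv : Convex ℝ (StrongDual.toWeakDual '' S) :=
    hS.linear_image (StrongDual.toWeakDual (𝕜 := ℝ) (E := X)).toLinearMap
  obtain ⟨Φ, u, hlt, hfu⟩ := geometric_hahn_banach_closed_point hconv.closure isClosed_closure hf
  obtain ⟨x, rfl⟩ := LinearMap.dualEmbedding_surjective (topDualPairing ℝ X) Φ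
  exact ⟨x, u, fun g hg ↦ hlt _ (subset_closure ⟨g, hg, rfl⟩), hfu⟩

lemma mul_evalSeminorm_le {r u : ℝ} (hr : 0 < r) {x : X} (hu : ∀ g ∈ A, ‖g‖ ≤ r → g x ≤ u) :
    r * evalSeminorm A x ≤ u := by
  rw [← le_div_iff₀' hr]
  refine evalSeminorm_le fun g hg hg1 ↦ ?_
  rw [le_div_iff₀' hr]
  have hnorm : ‖r • g‖ ≤ r := by
    rw [norm_smul, Real.norm_of_nonneg hr.le]
    exact mul_le_of_le_one_right hr.le hg1
  have hpos := hu (r • g) (A.smul_mem r hg) hnorm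
  have hneg := hu (-(r • g)) (A.neg_mem (A.smul_mem r hg)) (by rwa [norm_neg])
  calc r * ‖g x‖ = |r * g x| := by rw [abs_mul, abs_of_pos hr, Real.norm_eq_abs]
    _ ≤ u := abs_le'.2 ⟨by simpa using hpos, by simpa using hneg⟩

lemma mem_wStarClosure_iff_norm_apply_le {r : ℝ} (hr : 0 < r) {f : StrongDual ℝ X} :
    f ∈ wStarClosure ((A : Set (StrongDual ℝ X)) ∩ {g | ‖g‖ ≤ r}) ↔
      ∀ x, ‖f x‖ ≤ r * evalSeminorm A x := by
  refine ⟨norm_apply_le_of_mem_wStarClosure, fun hf ↦ ?_⟩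
  by_contra hnot
  have hball : Convex ℝ {g : StrongDual ℝ X | ‖g‖ ≤ r} := by
    simpa [Metric.closedBall] using convex_closedBall (0 : StrongDual ℝ X) r
  obtain ⟨x, u, hu, hux⟩ := exists_forall_apply_lt_of_notMem_wStarClosure
    (A.convex.inter hball) hnot
  have hle := mul_evalSeminorm_le hr fun g hgA hgr ↦ (hu g ⟨hgA, hgr⟩).le
  linarith [hf x, Real.le_norm_self (f x)]

variable (A) in
theorem wStarDerived_eq_dominatedFunctionals :
    wStarDerived (A : Set (StrongDual ℝ X)) = dominatedFunctionals (evalSeminorm A) := by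
  ext f
  constructor
  · intro hf
    obtain ⟨n, hn⟩ := Set.mem_iUnion.1 hf
    exact ⟨n, norm_apply_le_of_mem_wStarClosure hn⟩
  · rintro ⟨C, hC⟩
    obtain ⟨n, hn⟩ := exists_nat_gt C
    have hn0 : (0 : ℝ) < n := lt_of_le_of_lt C.coe_nonneg (mod_cast hn)
    refine Set.mem_iUnion.2 ⟨n, (mem_wStarClosure_iff_norm_apply_le hn0).2 fun x ↦ ?_⟩
    exact (hC x).trans (by gcongr; exact_mod_cast hn.le)

lemma wStarDerived_eq_univ_of_norm_le {K : ℝ≥0} (hK : ∀ x, ‖x‖ ≤ K * evalSeminorm A x) :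
    wStarDerived (A : Set (StrongDual ℝ X)) = Set.univ := by
  rw [wStarDerived_eq_dominatedFunctionals, Set.eq_univ_iff_forall]
  refine fun f ↦ ⟨‖f‖₊ * K, fun x ↦ ?_⟩
  calc ‖f x‖ ≤ ‖f‖ * ‖x‖ := f.le_opNorm x
    _ ≤ ‖f‖ * (K * evalSeminorm A x) := by gcongr; exact hK x
    _ = ↑(‖f‖₊ * K) * evalSeminorm A x := by push_cast; ring

end WeakStar

theorem stmt1_general {X : Type*} [NormedAddCommGroup X] [NormedSpace ℝ X]
    (A : Submodule ℝ (StrongDual ℝ X))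
    (hproper : wStarDerived (A : Set (StrongDual ℝ X)) ≠ Set.univ)
    (hdense : Dense (wStarDerived (A : Set (StrongDual ℝ X)))) :
    ∃ Z : Submodule ℝ X, IsClosed (Z : Set X) ∧ ¬ FiniteDimensional ℝ Z ∧
      TopologicalSpace.SeparableSpace (StrongDual ℝ Z) := by
  have hdense' : Dense (dominatedFunctionals (evalSeminorm A)) :=
    wStarDerived_eq_dominatedFunctionals A ▸ hdense
  refine exists_isClosed_separableSpace_dual_of_dense_dominatedFunctionals hdense' fun K ↦ ?_
  by_contra! hK
  exact hproper (wStarDerived_eq_univ_of_norm_le hK)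

/-- If the dual of a Banach space $X$ contains a linear subspace $A$ whose weak* derived
set $A^{(1)}$ is a proper norm-dense subset of $X^*$, then $X$ contains an
infinite-dimensional closed subspace with separable dual. -/
theorem stmt1 (X : Type*) [NormedAddCommGroup X] [NormedSpace ℝ X] [CompleteSpace X]
    (A : Submodule ℝ (StrongDual ℝ X))
    (hproper : wStarDerived (A : Set (StrongDual ℝ X)) ≠ Set.univ)
    (hdense : Dense (wStarDerived (A : Set (StrongDual ℝ X)))) :
    ∃ Z : Submodule ℝ X, IsClosed (Z : Set X) ∧ ¬ FiniteDimensional ℝ Z ∧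
      TopologicalSpace.SeparableSpace (StrongDual ℝ Z) := by
  exact stmt1_general A hproper hdense
end

section
/- Let X be a real Banach space which is not quasi-reflexive and which contains an infinite-dimensional closed subspace with separable dual. Then there exists a linear subspace A ⊆ X* such that the weak* derived set A^(1) is a proper norm-dense subset of X*. -/
open NormedSpace

/-!
Let `(x_n)` be a sequence in `X` with biorthogonal norm-one functionals `φ_n`, such that the
functionals vanishing at almost all `x_n` are dense. Take `h_n ∈ X**` with `∑ ‖h_n‖ ‖φ_n‖ < 1` and
put `S = 1 - ∑ h_n ⊗ φ_n`, an automorphism of `X*`; the subspace is `A = S⁻¹({x_n}^⊥)`, that is,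
the set of `f` with `f(x_n) = h_n(f)` for all `n`. Fast decay of `‖h_n‖` forces bounded subsets of
`A` to decay along `(x_n)`, hence `A^(1) ≠ X*`. On the other hand, restrictions to `X` of
elements of `A^⊥⊥ ⊆ X***` lie in `A^(1)`. If there are `ψ_n ∈ X***` biorthogonal to `h_n` and
vanishing on both `X` and `{x_n}^⊥⊥`, and if `(S f)(x_m) = 0` for `m ≥ N`, then
`f + ∑_{m < N} (S f)(x_m) ψ_m` lies in `A^⊥⊥` and restricts to `f`; so `A^(1)` contains a dense set.
Such `h_n` and `ψ_n` exist as soon as the closure of `X + {x_n}^⊥⊥` has infinite codimension in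
`X**`.

A subspace `Z` with separable dual provides such `x_n` and `φ_n` with the `x_n` in the span of any
independent sequence `(y_n)` in `Z`. If the closure of `X + {y_n}^⊥⊥` has infinite codimension, so
does the one for `(x_n)`. Otherwise `{y_n}^⊥⊥` is infinite-dimensional modulo `X`, because `X**/X`
is infinite-dimensional, and Helly's theorem allows choosing the `x_n` so sparsely that infinitely
many functionals on `{y_n}^⊥⊥` modulo `X` are implemented by weak* limits from `{x_n}^⊥`.
-/

open Filter Topology StrongDual

-- Instances on iterated duals nest deeper than the default bound.
set_option maxSynthPendingDepth 3

section Annihilators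

variable {𝕜 E : Type*} [RCLike 𝕜] [NormedAddCommGroup E] [NormedSpace 𝕜 E]

lemma mem_polarSubmodule_span {f : StrongDual 𝕜 E} {s : Set E} :
    f ∈ polarSubmodule 𝕜 (Submodule.span 𝕜 s) ↔ ∀ x ∈ s, f x = 0 := by
  rw [mem_polarSubmodule]
  exact Submodule.span_le (p := LinearMap.ker f.toLinearMap)

lemma polarSubmodule_anti {P Q : Submodule 𝕜 E} (h : P ≤ Q) :
    polarSubmodule 𝕜 Q ≤ polarSubmodule 𝕜 P := fun f hf ↦ by
  rw [mem_polarSubmodule] at hf ⊢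
  exact fun x hx ↦ hf x (h hx)

lemma exists_mem_polarSubmodule_apply_eq_one {P : Submodule 𝕜 E} (hP : IsClosed (P : Set E))
    {v : E} (hv : v ∉ P) : ∃ f ∈ polarSubmodule 𝕜 P, f v = 1 := by
  obtain ⟨g, hg⟩ := SeparatingDual.exists_eq_one (R := 𝕜)
    (mt (Submodule.Quotient.mk_eq_zero P).mp hv)
  refine ⟨g.comp P.mkQL, (mem_polarSubmodule 𝕜 _ _).mpr fun x hx ↦ ?_, hg⟩
  simp [(Submodule.Quotient.mk_eq_zero P).mpr hx]

end Annihilators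

section Biorthogonal

/-- Biorthogonality of a family of vectors and a family of continuous functionals:
`φ i (u j)` is the Kronecker delta. -/
def Biorthogonal {ι 𝕜 E : Type*} [DecidableEq ι] [RCLike 𝕜] [NormedAddCommGroup E]
    [NormedSpace 𝕜 E] (φ : ι → StrongDual 𝕜 E) (u : ι → E) : Prop :=
  ∀ i j, φ i (u j) = if i = j then 1 else 0

namespace Biorthogonal

variable {ι 𝕜 E : Type*} [DecidableEq ι] [RCLike 𝕜] [NormedAddCommGroup E] [NormedSpace 𝕜 E]
  {φ : ι → StrongDual 𝕜 E} {u : ι → E}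

lemma apply_self (h : Biorthogonal φ u) (i : ι) : φ i (u i) = 1 := by simp [h i i]

lemma apply_of_ne (h : Biorthogonal φ u) {i j : ι} (hij : i ≠ j) : φ i (u j) = 0 := by
  simp [h i j, hij]

lemma inclusionInDoubleDual (h : Biorthogonal φ u) :
    Biorthogonal (fun i ↦ inclusionInDoubleDual 𝕜 E (u i)) φ := fun i j ↦ by
  simpa [eq_comm] using h j i

lemma apply_hasSum (h : Biorthogonal φ u) {c : ι → 𝕜} {U : E}
    (hU : HasSum (fun j ↦ c j • u j) U) (i : ι) : φ i U = c i := by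
  have hsingle := hasSum_single (f := fun j ↦ φ i (c j • u j)) i fun j hj ↦ by
    simp [h.apply_of_ne hj.symm]
  simpa [h.apply_self] using (hU.mapL (φ i)).unique hsingle

lemma linearIndependent (h : Biorthogonal φ u) : LinearIndependent 𝕜 u :=
  LinearIndependent.of_pairwise_dual_eq_zero_one u (fun i ↦ (φ i).toLinearMap)
    (fun _ _ hij ↦ h.apply_of_ne hij) h.apply_self

lemma smul_smul (h : Biorthogonal φ u) {c : ι → 𝕜} (hc : ∀ i, c i ≠ 0) :
    Biorthogonal (fun i ↦ (c i)⁻¹ • φ i) (fun i ↦ c i • u i) := fun i j ↦ by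
  rcases eq_or_ne i j with rfl | hij
  · simp [h.apply_self, hc i]
  · simp [h.apply_of_ne hij, hij]

lemma apply_eq_sum (h : Biorthogonal φ u) {s : Finset ι} {f : StrongDual 𝕜 E}
    (hf : ∀ i ∉ s, f (u i) = 0) {w : StrongDual 𝕜 (StrongDual 𝕜 E)}
    (hw : w ∈ polarSubmodule 𝕜 (polarSubmodule 𝕜 (Submodule.span 𝕜 (Set.range u)))) :
    w f = ∑ i ∈ s, f (u i) * w (φ i) := by
  have hmem : f - ∑ i ∈ s, f (u i) • φ i ∈ polarSubmodule 𝕜 (Submodule.span 𝕜 (Set.range u)) := by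
    rw [mem_polarSubmodule_span, Set.forall_mem_range]
    intro j
    by_cases hj : j ∈ s
    · simp [h _ j, hj]
    · simp [h _ j, hj, hf j hj]
  simpa [sub_eq_zero] using (mem_polarSubmodule 𝕜 _ _).mp hw _ hmem

lemma not_coFG [Infinite ι] (h : Biorthogonal φ u) {P : Submodule 𝕜 E}
    (hφ : ∀ i, φ i ∈ polarSubmodule 𝕜 P) : ¬ P.CoFG := by
  intro hP
  have hker (i : ι) : P ≤ LinearMap.ker (φ i).toLinearMap := (mem_polarSubmodule 𝕜 _ _).mp (hφ i)
  exact Infinite.not_finite <| (LinearIndependent.of_pairwise_dual_eq_zero_one (R := 𝕜)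
    (fun i ↦ P.mkQ (u i)) (fun i ↦ P.liftQ _ (hker i))
    (fun _ _ hij ↦ h.apply_of_ne hij) h.apply_self).finite

end Biorthogonal

end Biorthogonal

section Selection

lemma exists_seq_forall_image_range {α : Type*} [DecidableEq α] {P : ℕ → Finset α → α → Prop}
    (h : ∀ n s, ∃ a, P n s a) :
    ∃ f : ℕ → α, ∀ n, P n ((Finset.range n).image f) (f n) := by
  choose F hF using h
  let s : ℕ → Finset α := fun n ↦ n.rec ∅ fun k t ↦ insert (F k t) t
  have hs (n : ℕ) : s n = (Finset.range n).image fun k ↦ F k (s k) := by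
    induction n with
    | zero => rfl
    | succ n ih => rw [Finset.range_add_one, Finset.image_insert, ← ih]
  exact ⟨fun n ↦ F n (s n), fun n ↦ hs n ▸ hF n (s n)⟩

variable {𝕜 E : Type*} [RCLike 𝕜] [NormedAddCommGroup E] [NormedSpace 𝕜 E]

lemma exists_mem_notMem_forall_apply_eq_zero {Z R : Submodule 𝕜 E}
    (hZ : ¬ FiniteDimensional 𝕜 Z) [FiniteDimensional 𝕜 R] (T : Finset (StrongDual 𝕜 E)) :
    ∃ v ∈ Z, v ∉ R ∧ ∀ t ∈ T, t v = 0 := by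
  by_contra! hR
  let L : Z →ₗ[𝕜] T → 𝕜 := LinearMap.pi fun t ↦ t.1.toLinearMap ∘ₗ Z.subtype
  have hker : (LinearMap.ker L).map Z.subtype ≤ R := by
    rintro _ ⟨v, hv, rfl⟩
    by_contra hvR
    obtain ⟨t, ht, htv⟩ := hR v v.2 hvR
    exact htv (congrFun hv ⟨t, ht⟩)
  have : FiniteDimensional 𝕜 ((LinearMap.ker L).map Z.subtype) :=
    Submodule.finiteDimensional_of_le hker
  have : FiniteDimensional 𝕜 (LinearMap.ker L) :=
    (Submodule.equivSubtypeMap Z (LinearMap.ker L)).symm.finiteDimensional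
  have : (LinearMap.ker L).CoFG := .ker L
  exact hZ (Module.Finite.of_submodule_quotient (LinearMap.ker L))

lemma exists_mem_norming_functional {Z : Submodule 𝕜 E} (hZ : ¬ FiniteDimensional 𝕜 Z)
    (S : Finset E) (T : Finset (StrongDual 𝕜 E)) :
    ∃ v ∈ Z, (∀ t ∈ T, t v = 0) ∧
      ∃ φ : StrongDual 𝕜 E, ‖φ‖ = 1 ∧ φ v = 1 ∧ ∀ s ∈ S, φ s = 0 := by
  obtain ⟨w, hwZ, hwS, hwT⟩ :=
    exists_mem_notMem_forall_apply_eq_zero (R := Submodule.span 𝕜 (S : Set E)) hZ T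
  obtain ⟨φ, hφS, hφw⟩ :=
    exists_mem_polarSubmodule_apply_eq_one (Submodule.closed_of_finiteDimensional _) hwS
  have hφ : (‖φ‖ : 𝕜) ≠ 0 := by
    rw [RCLike.ofReal_ne_zero, norm_ne_zero_iff]
    rintro rfl
    exact zero_ne_one hφw
  refine ⟨(‖φ‖ : 𝕜) • w, Z.smul_mem _ hwZ, fun t ht ↦ by simp [hwT t ht], (‖φ‖ : 𝕜)⁻¹ • φ,
    ?_, ?_, fun s hs ↦ ?_⟩
  · rw [norm_smul, norm_inv, RCLike.norm_ofReal, abs_norm]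
    exact inv_mul_cancel₀ (by simpa using hφ)
  · simp [hφw, hφ]
  · simp [mem_polarSubmodule_span.mp hφS s hs]

lemma exists_biorthogonal_seq [DecidableEq E] {Z : Submodule 𝕜 E}
    (hZ : ¬ FiniteDimensional 𝕜 Z) (T : ℕ → Finset E → Finset (StrongDual 𝕜 E)) :
    ∃ (x : ℕ → E) (φ : ℕ → StrongDual 𝕜 E), (∀ n, x n ∈ Z) ∧ Biorthogonal φ x ∧
      (∀ n, ‖φ n‖ = 1) ∧ ∀ n, ∀ g ∈ T n ((Finset.range n).image x), ∀ m ≥ n, g (x m) = 0 := by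
  classical
  -- A triple records a vector, its functional, and the functionals that must vanish from then on.
  let good (n : ℕ) (s : Finset (E × StrongDual 𝕜 E × Finset (StrongDual 𝕜 E)))
      (a : E × StrongDual 𝕜 E × Finset (StrongDual 𝕜 E)) : Prop :=
    a.1 ∈ Z ∧ ‖a.2.1‖ = 1 ∧ a.2.1 a.1 = 1 ∧ a.2.2 = T n (s.image Prod.fst) ∧
      (∀ g ∈ a.2.2, g a.1 = 0) ∧
      ∀ b ∈ s, a.2.1 b.1 = 0 ∧ b.2.1 a.1 = 0 ∧ ∀ g ∈ b.2.2, g a.1 = 0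
  have hgood (n s) : ∃ a, good n s a := by
    let C := T n (s.image Prod.fst)
    obtain ⟨v, hvZ, hv, φ, hφ, hφv, hφs⟩ := exists_mem_norming_functional hZ (s.image Prod.fst)
      (C ∪ s.image (fun b ↦ b.2.1) ∪ s.biUnion fun b ↦ b.2.2)
    simp only [Finset.mem_union, Finset.mem_image, Finset.mem_biUnion] at hv
    exact ⟨(v, φ, C), hvZ, hφ, hφv, rfl, fun g hg ↦ hv g (.inl (.inl hg)), fun b hb ↦
      ⟨hφs _ (Finset.mem_image_of_mem _ hb), hv _ (.inl (.inr ⟨b, hb, rfl⟩)),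
        fun g hg ↦ hv g (.inr ⟨b, hb, hg⟩)⟩⟩
  obtain ⟨f, hf⟩ := exists_seq_forall_image_range hgood
  choose hZ hnorm hself hT hcur hprev using hf
  have hlt {m n : ℕ} (hmn : m < n) :=
    hprev n (f m) (Finset.mem_image_of_mem f (Finset.mem_range.mpr hmn))
  refine ⟨fun n ↦ (f n).1, fun n ↦ (f n).2.1, hZ, fun i j ↦ ?_, hnorm, fun n g hg m hm ↦ ?_⟩
  · rcases lt_trichotomy i j with hij | rfl | hij
    · rw [(hlt hij).2.1, if_neg hij.ne]
    · rw [hself, if_pos rfl]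
    · rw [(hlt hij).1, if_neg hij.ne']
  · rw [← Function.comp_def, ← Finset.image_image, ← hT n] at hg
    rcases hm.eq_or_lt with rfl | hnm
    · exact hcur n g hg
    · exact (hlt hnm).2.2 g hg

lemma exists_linearIndependent_seq {Z : Submodule 𝕜 E} (hZ : ¬ FiniteDimensional 𝕜 Z) :
    ∃ y : ℕ → E, (∀ n, y n ∈ Z) ∧ LinearIndependent 𝕜 y := by
  classical
  obtain ⟨y, φ, hyZ, hφy, -⟩ := exists_biorthogonal_seq hZ fun _ _ ↦ ∅
  exact ⟨y, hyZ, hφy.linearIndependent⟩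

lemma not_finiteDimensional_span_range {ι : Type*} [Infinite ι] {y : ι → E}
    (hy : LinearIndependent 𝕜 y) :
    ¬ FiniteDimensional 𝕜 (Submodule.span 𝕜 (Set.range y)) := fun _ ↦
  Infinite.not_finite (linearIndependent_span hy).finite

lemma exists_biorthogonal_polarSubmodule {P Q : Submodule 𝕜 E} (hP : IsClosed (P : Set E))
    (hQ : ¬ FiniteDimensional 𝕜 (Q.map P.mkQ)) :
    ∃ (h : ℕ → E) (ψ : ℕ → StrongDual 𝕜 E), (∀ n, h n ∈ Q) ∧ (∀ n, ψ n ∈ polarSubmodule 𝕜 P) ∧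
      Biorthogonal ψ h := by
  classical
  obtain ⟨u, φ, hu, hφu, -⟩ := exists_biorthogonal_seq hQ fun _ _ ↦ ∅
  choose h hhQ hh using hu
  refine ⟨h, fun n ↦ (φ n).comp P.mkQL, hhQ, fun n ↦ (mem_polarSubmodule 𝕜 _ _).mpr fun x hx ↦ ?_,
    fun i j ↦ ?_⟩
  · simp [(Submodule.Quotient.mk_eq_zero P).mpr hx]
  · rw [← hφu i j, ← hh j]
    rfl

lemma exists_biorthogonal_polarSubmodule_norm_le {P : Submodule 𝕜 E} (hP : IsClosed (P : Set E))
    (hPcoFG : ¬ P.CoFG) {a : ℕ → ℝ} (ha : ∀ n, 0 < a n) :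
    ∃ (h : ℕ → E) (ψ : ℕ → StrongDual 𝕜 E), (∀ n, ‖h n‖ ≤ a n) ∧
      (∀ n, ψ n ∈ polarSubmodule 𝕜 P) ∧ Biorthogonal ψ h := by
  obtain ⟨h, ψ, -, hψP, hψh⟩ := exists_biorthogonal_polarSubmodule (Q := ⊤) hP <| by
    rw [Submodule.map_top, Submodule.range_mkQ]
    exact fun hfin ↦ hPcoFG (Module.Finite.equiv Submodule.topEquiv)
  let c (n : ℕ) : ℝ := a n / (1 + ‖h n‖)
  have hc (n : ℕ) : 0 < c n := div_pos (ha n) (by positivity)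
  refine ⟨fun n ↦ (c n : 𝕜) • h n, fun n ↦ (c n : 𝕜)⁻¹ • ψ n, fun n ↦ ?_,
    fun n ↦ Submodule.smul_mem _ _ (hψP n),
    hψh.smul_smul fun n ↦ RCLike.ofReal_ne_zero.mpr (hc n).ne'⟩
  rw [norm_smul, RCLike.norm_of_nonneg (hc n).le, div_mul_eq_mul_div]
  exact div_le_of_le_mul₀ (by positivity) (ha n).le
    (mul_le_mul_of_nonneg_left (by linarith) (ha n).le)

lemma dense_setOf_eventually_apply_eq_zero {Z : Submodule 𝕜 E} {F : ℕ → StrongDual 𝕜 E}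
    (hF : DenseRange fun j ↦ (F j).comp Z.subtypeL) {x : ℕ → E} (hx : ∀ n, x n ∈ Z)
    (hFx : ∀ j, ∀ᶠ m in atTop, F j (x m) = 0) :
    Dense {f : StrongDual 𝕜 E | ∀ᶠ m in atTop, f (x m) = 0} := by
  refine Metric.dense_iff.mpr fun f r hr ↦ ?_
  obtain ⟨j, hj⟩ := hF.exists_dist_lt (f.comp Z.subtypeL) hr
  obtain ⟨e, he, henorm⟩ := exists_extension_norm_eq Z ((f - F j).comp Z.subtypeL)
  refine ⟨f - e, ?_, ?_⟩
  · rw [mem_ball_iff_norm', sub_sub_cancel, henorm]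
    simpa [dist_eq_norm] using hj
  · filter_upwards [hFx j] with m hm
    have hem : e (x m) = f (x m) - F j (x m) := he ⟨x m, hx m⟩
    simp [hem, hm]

lemma exists_biorthogonal_seq_dense [DecidableEq E] {W Z : Submodule 𝕜 E} (hWZ : W ≤ Z)
    (hW : ¬ FiniteDimensional 𝕜 W) [TopologicalSpace.SeparableSpace (StrongDual 𝕜 Z)]
    (T : ℕ → Finset E → Finset (StrongDual 𝕜 E)) :
    ∃ (x : ℕ → E) (φ : ℕ → StrongDual 𝕜 E), (∀ n, x n ∈ W) ∧ Biorthogonal φ x ∧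
      (∀ n, ‖φ n‖ = 1) ∧ Dense {f : StrongDual 𝕜 E | ∀ᶠ m in atTop, f (x m) = 0} ∧
      ∀ n, ∀ g ∈ T n ((Finset.range n).image x), ∀ m ≥ n, g (x m) = 0 := by
  classical
  choose F hF _ using exists_extension_norm_eq Z
  let F₀ (n : ℕ) := F (TopologicalSpace.denseSeq (StrongDual 𝕜 Z) n)
  have hF₀ : (fun n ↦ (F₀ n).comp Z.subtypeL) = TopologicalSpace.denseSeq (StrongDual 𝕜 Z) :=
    funext fun n ↦ ContinuousLinearMap.ext (hF _)
  obtain ⟨x, φ, hxW, hφx, hφ, hT⟩ := exists_biorthogonal_seq hW fun n S ↦ insert (F₀ n) (T n S)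
  refine ⟨x, φ, hxW, hφx, hφ, ?_, fun n g hg ↦ hT n g (Finset.mem_insert_of_mem hg)⟩
  refine dense_setOf_eventually_apply_eq_zero (Z := Z) (F := F₀) ?_ (fun n ↦ hWZ (hxW n)) fun n ↦ ?_
  · exact hF₀ ▸ TopologicalSpace.denseRange_denseSeq _
  · exact eventually_atTop.mpr ⟨n, hT n _ (Finset.mem_insert_self _ _)⟩

end Selection

section Codimension

variable {𝕜 E : Type*} [RCLike 𝕜] [NormedAddCommGroup E] [NormedSpace 𝕜 E]

lemma not_coFG_topologicalClosure_sup_or_not_finiteDimensional_map {P Q : Submodule 𝕜 E}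
    (hP : IsClosed (P : Set E)) (hPcoFG : ¬ P.CoFG) :
    ¬ (P ⊔ Q).topologicalClosure.CoFG ∨ ¬ FiniteDimensional 𝕜 (Q.map P.mkQ) := by
  by_contra! ⟨hclosure, hmap⟩
  have hclosed : IsClosed ((P ⊔ Q : Submodule 𝕜 E) : Set E) := by
    rw [← Submodule.comap_map_mkQ]
    exact (Submodule.closed_of_finiteDimensional (Q.map P.mkQ)).preimage P.mkQL.continuous
  rw [hclosed.submodule_topologicalClosure_eq] at hclosure
  have : Module.Finite 𝕜 ((E ⧸ P) ⧸ Q.map P.mkQ) :=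
    .equiv (Submodule.quotientQuotientEquivQuotientSup P Q).symm
  exact hPcoFG (Module.Finite.of_submodule_quotient (Q.map P.mkQ))

end Codimension

section Helly

variable {𝕜 E : Type*} [RCLike 𝕜] [NormedAddCommGroup E] [NormedSpace 𝕜 E]

lemma exists_forall_apply_eq_of_forall_sum_eq_zero {ι : Type*} [Fintype ι]
    {F : ι → StrongDual 𝕜 E} {c : ι → 𝕜}
    (h : ∀ a : ι → 𝕜, ∑ i, a i • F i = 0 → ∑ i, a i * c i = 0) :
    ∃ g, ∀ i, F i g = c i := by
  classical
  let L : E →ₗ[𝕜] ι → 𝕜 := LinearMap.pi fun i ↦ (F i).toLinearMap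
  by_contra! hc
  have hcL : c ∉ LinearMap.range L := fun ⟨g, hg⟩ ↦ (hc g).elim fun i hi ↦ hi (congrFun hg i)
  obtain ⟨Λ, hΛc, hΛL⟩ := Submodule.exists_le_ker_of_notMem hcL
  have hΛ (v : ι → 𝕜) : Λ v = ∑ i, Λ (fun j ↦ if i = j then 1 else 0) * v i := by
    simp only [Λ.pi_apply_eq_sum_univ v, smul_eq_mul, mul_comm]
  refine hΛc ((hΛ c).trans (h _ ?_))
  ext g
  simpa [L] using (hΛ (L g)).symm.trans (hΛL ⟨g, rfl⟩)

theorem exists_norm_lt_forall_apply_eq {ι : Type*} [Fintype ι] {F : ι → StrongDual 𝕜 E}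
    {c : ι → 𝕜} {C r : ℝ} (hC : 0 ≤ C)
    (h : ∀ a : ι → 𝕜, ‖∑ i, a i * c i‖ ≤ C * ‖∑ i, a i • F i‖) (hr : C < r) :
    ∃ g, ‖g‖ < r ∧ ∀ i, F i g = c i := by
  obtain ⟨g₀, hg₀⟩ : ∃ g, ∀ i, F i g = c i :=
    exists_forall_apply_eq_of_forall_sum_eq_zero fun a ha ↦ by simpa [ha] using h a
  let K : Submodule 𝕜 E := ⨅ i, LinearMap.ker (F i).toLinearMap
  have hK : IsClosed (K : Set E) := by
    simpa only [K, Submodule.coe_iInf] using isClosed_iInter fun i ↦ (F i).isClosed_ker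
  suffices hnorm : ‖K.mkQ g₀‖ ≤ C by
    obtain ⟨g, hg, hgr⟩ :=
      Submodule.Quotient.norm_mk_lt (K.mkQ g₀) (sub_pos.mpr (hnorm.trans_lt hr))
    refine ⟨g, by simpa using hgr, fun i ↦ ?_⟩
    have hgK : g - g₀ ∈ K := (Submodule.Quotient.eq K).mp hg
    simpa [sub_eq_zero, hg₀] using (Submodule.mem_iInf _).mp hgK i
  obtain ⟨G, hG, hGg₀⟩ := exists_dual_vector'' 𝕜 (K.mkQ g₀)
  let H : StrongDual 𝕜 E := G.comp K.mkQL
  have hHnorm : ‖H‖ ≤ 1 := H.opNorm_le_bound zero_le_one fun g ↦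
    (G.le_of_opNorm_le hG _).trans (by gcongr; exact Submodule.Quotient.norm_mk_le K g)
  have hHker : K ≤ LinearMap.ker H.toLinearMap := fun x hx ↦ by
    simp [H, (Submodule.Quotient.mk_eq_zero K).mpr hx]
  obtain ⟨a, ha⟩ := (Submodule.mem_span_range_iff_exists_fun 𝕜).mp
    (mem_span_of_iInf_ker_le_ker hHker)
  have haH : ∑ i, a i • F i = H := ContinuousLinearMap.ext fun g ↦ by
    simpa using LinearMap.congr_fun ha g
  calc ‖K.mkQ g₀‖ = ‖H g₀‖ := by
        rw [show H g₀ = G (K.mkQ g₀) from rfl, hGg₀, RCLike.norm_ofReal, abs_norm]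
    _ = ‖∑ i, a i * c i‖ := by simp [← haH, hg₀]
    _ ≤ C * ‖H‖ := haH ▸ h a
    _ ≤ C := mul_le_of_le_one_right hC hHnorm

lemma exists_norm_lt_forall_mem_apply_eq (ψ : StrongDual 𝕜 (StrongDual 𝕜 E)) {r : ℝ}
    (hr : ‖ψ‖ < r) (H : Finset (StrongDual 𝕜 E)) :
    ∃ g : E, ‖g‖ < r ∧ ∀ F ∈ H, F g = ψ F := by
  obtain ⟨g, hg, hgF⟩ := exists_norm_lt_forall_apply_eq (ι := H) (F := Subtype.val)
    (c := fun F ↦ ψ F) (norm_nonneg ψ) (fun a ↦ by simpa using ψ.le_opNorm (∑ F, a F • F.1)) hr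
  exact ⟨g, hg, fun F hF ↦ hgF ⟨F, hF⟩⟩

lemma exists_bidual_apply_eq_of_eventually {ι : Type*} {l : Filter ι} [l.NeBot] {g : ι → E}
    {C : ℝ} (hg : ∀ i, ‖g i‖ ≤ C) :
    ∃ Ψ : StrongDual 𝕜 (StrongDual 𝕜 E), ∀ (F : StrongDual 𝕜 E) (c : 𝕜),
      (∀ᶠ i in l, F (g i) = c) → Ψ F = c := by
  let J (i : ι) : WeakDual 𝕜 (StrongDual 𝕜 E) :=
    StrongDual.toWeakDual (inclusionInDoubleDual 𝕜 E (g i))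
  have hJ (i : ι) : J i ∈ WeakDual.toStrongDual ⁻¹' Metric.closedBall 0 C := by
    simpa [J, dist_eq_norm] using (double_dual_bound 𝕜 E (g i)).trans (hg i)
  obtain ⟨Ψ, -, hΨ⟩ := (WeakDual.isCompact_closedBall 0 C).ultrafilter_le_nhds'
    ((Ultrafilter.of l).map J) (mem_map.mpr (univ_mem' hJ))
  refine ⟨WeakDual.toStrongDual Ψ, fun F c hF ↦ ?_⟩
  have hlim : Tendsto (fun i ↦ F (g i)) (Ultrafilter.of l) (𝓝 (Ψ F)) :=
    ((WeakDual.eval_continuous F).tendsto Ψ).comp hΨ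
  exact tendsto_nhds_unique_of_eventuallyEq hlim tendsto_const_nhds (Ultrafilter.of_le l hF)

end Helly

section WStarDerived

variable {X : Type*} [NormedAddCommGroup X] [NormedSpace ℝ X]

lemma mem_wStarDerived_of_forall_norm_apply_le {A : Submodule ℝ (StrongDual ℝ X)}
    {f : StrongDual ℝ X} {C : ℝ} (hC : 0 ≤ C)
    (h : ∀ y, ‖f y‖ ≤ C * ‖(inclusionInDoubleDual ℝ X y).comp A.subtypeL‖) :
    f ∈ wStarDerived (A : Set (StrongDual ℝ X)) := by
  have hfin (S : Finset X) : ∃ g : A, ‖g‖ < C + 1 ∧ ∀ y : S, g.1 y = f y := by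
    refine exists_norm_lt_forall_apply_eq
      (F := fun y : S ↦ (inclusionInDoubleDual ℝ X y).comp A.subtypeL) hC (fun a ↦ ?_)
      (lt_add_one C)
    have hF : (inclusionInDoubleDual ℝ X (∑ y, a y • y.1)).comp A.subtypeL =
        ∑ y, a y • (inclusionInDoubleDual ℝ X y.1).comp A.subtypeL := by
      ext g
      simp
    have hy := h (∑ y, a y • y.1)
    rw [hF] at hy
    simpa using hy
  choose g hgC hg using hfin
  obtain ⟨n, hn⟩ := exists_nat_ge (C + 1)
  have hlim : Tendsto (fun S ↦ toWeakDual (g S : StrongDual ℝ X)) atTop (𝓝 (toWeakDual f)) := by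
    refine tendsto_iff_forall_eval_tendsto_topDualPairing.mpr fun y ↦
      tendsto_const_nhds.congr' ?_
    filter_upwards [eventually_ge_atTop {y}] with S hS
    exact (hg S ⟨y, hS (Finset.mem_singleton_self y)⟩).symm
  have hmem (S : Finset X) : toWeakDual (g S : StrongDual ℝ X) ∈
      toWeakDual '' ((A : Set (StrongDual ℝ X)) ∩ {g | ‖g‖ ≤ n}) :=
    ⟨g S, ⟨(g S).2, (hgC S).le.trans hn⟩, rfl⟩
  have hclosure := mem_closure_of_tendsto hlim (.of_forall hmem)
  exact Set.mem_iUnion.mpr ⟨n, hclosure⟩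

lemma comp_inclusionInDoubleDual_mem_wStarDerived {A : Submodule ℝ (StrongDual ℝ X)}
    {Φ : StrongDual ℝ (StrongDual ℝ (StrongDual ℝ X))}
    (hΦ : Φ ∈ polarSubmodule ℝ (polarSubmodule ℝ A)) :
    Φ.comp (inclusionInDoubleDual ℝ X) ∈ wStarDerived (A : Set (StrongDual ℝ X)) := by
  refine mem_wStarDerived_of_forall_norm_apply_le (norm_nonneg Φ) fun y ↦ ?_
  obtain ⟨G, hG, hGnorm⟩ :=
    exists_extension_norm_eq A ((inclusionInDoubleDual ℝ X y).comp A.subtypeL)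
  have hyG : inclusionInDoubleDual ℝ X y - G ∈ polarSubmodule ℝ A :=
    (mem_polarSubmodule ℝ _ _).mpr fun g hg ↦ sub_eq_zero.mpr (hG ⟨g, hg⟩).symm
  have hΦG : Φ (inclusionInDoubleDual ℝ X y) = Φ G :=
    sub_eq_zero.mp ((map_sub Φ _ _).symm.trans ((mem_polarSubmodule ℝ _ _).mp hΦ _ hyG))
  rw [ContinuousLinearMap.comp_apply, hΦG, ← hGnorm]
  exact Φ.le_opNorm G

lemma exists_norm_apply_le_of_mem_wStarDerived {A : Set (StrongDual ℝ X)} {f : StrongDual ℝ X}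
    (hf : f ∈ wStarDerived A) {ι : Type*} {x : ι → X} {c : ι → ℝ} (hc : ∀ i, 0 ≤ c i)
    (hA : ∀ g ∈ A, ∀ i, ‖g (x i)‖ ≤ c i * ‖g‖) : ∃ N : ℕ, ∀ i, ‖f (x i)‖ ≤ c i * N := by
  obtain ⟨N, hN⟩ := Set.mem_iUnion.mp hf
  refine ⟨N, fun i ↦ ?_⟩
  have hclosed : IsClosed {g : WeakDual ℝ X | ‖g (x i)‖ ≤ c i * N} :=
    isClosed_le (WeakDual.eval_continuous (x i)).norm continuous_const
  refine closure_minimal ?_ hclosed hN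
  rintro _ ⟨g, ⟨hgA, hgN⟩, rfl⟩
  exact (hA g hgA i).trans (mul_le_mul_of_nonneg_left hgN (hc i))

lemma wStarDerived_ne_univ_of_forall_norm_apply_le {A : Set (StrongDual ℝ X)} {x : ℕ → X}
    {φ : ℕ → StrongDual ℝ X} (hφx : Biorthogonal φ x) (hφ : ∀ n, ‖φ n‖ = 1)
    (hA : ∀ g ∈ A, ∀ n, ‖g (x n)‖ ≤ (1 / 4) ^ n * ‖g‖) : wStarDerived A ≠ Set.univ := by
  intro huniv
  have hsum : Summable fun n ↦ (1 / 2 : ℝ) ^ n • φ n :=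
    .of_norm_bounded summable_geometric_two fun n ↦ by simp [norm_smul, hφ]
  obtain ⟨N, hN⟩ := exists_norm_apply_le_of_mem_wStarDerived
    (huniv ▸ Set.mem_univ (∑' n, (1 / 2 : ℝ) ^ n • φ n)) (fun n ↦ by positivity) hA
  obtain ⟨n, hn⟩ := pow_unbounded_of_one_lt (N : ℝ) one_lt_two
  have hn_apply : (∑' n, (1 / 2 : ℝ) ^ n • φ n) (x n) = (1 / 2) ^ n :=
    hφx.inclusionInDoubleDual.apply_hasSum hsum.hasSum n
  have hNn := hN n
  rw [hn_apply, norm_pow] at hNn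
  have : (1 / 2 : ℝ) ^ n = (1 / 4) ^ n * 2 ^ n := by rw [← mul_pow]; norm_num
  rw [Real.norm_of_nonneg (by norm_num), this] at hNn
  exact hn.not_ge (le_of_mul_le_mul_left hNn (by positivity))

end WStarDerived

section BidualHull

variable {𝕜 E : Type*} [RCLike 𝕜] [NormedAddCommGroup E] [NormedSpace 𝕜 E]

/-- The closed linear span, in the bidual of `E`, of the canonical image of `E` together with the
second annihilator of `Z`. -/
noncomputable def bidualHull (Z : Submodule 𝕜 E) : Submodule 𝕜 (StrongDual 𝕜 (StrongDual 𝕜 E)) :=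
  (LinearMap.range (inclusionInDoubleDual 𝕜 E).toLinearMap ⊔
    polarSubmodule 𝕜 (polarSubmodule 𝕜 Z)).topologicalClosure

lemma bidualHull_mono : Monotone (bidualHull : Submodule 𝕜 E → _) := fun _ _ h ↦
  Submodule.topologicalClosure_mono <|
    sup_le_sup_left (polarSubmodule_anti (polarSubmodule_anti h)) _

lemma isClosed_range_inclusionInDoubleDual [CompleteSpace E] :
    IsClosed (LinearMap.range (inclusionInDoubleDual 𝕜 E).toLinearMap :
      Set (StrongDual 𝕜 (StrongDual 𝕜 E))) :=
  (inclusionInDoubleDualLi 𝕜).isometry.isClosedEmbedding.isClosed_range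

lemma inclusionInDoubleDual_mem_bidualHull (Z : Submodule 𝕜 E) (x : E) :
    inclusionInDoubleDual 𝕜 E x ∈ bidualHull Z :=
  Submodule.le_topologicalClosure _ (Submodule.mem_sup_left ⟨x, rfl⟩)

lemma mem_bidualHull_of_mem_polarSubmodule {Z : Submodule 𝕜 E}
    {v : StrongDual 𝕜 (StrongDual 𝕜 E)} (hv : v ∈ polarSubmodule 𝕜 (polarSubmodule 𝕜 Z)) :
    v ∈ bidualHull Z :=
  Submodule.le_topologicalClosure _ (Submodule.mem_sup_right hv)

lemma sub_inclusionInDoubleDual_comp_mem_polarSubmodule_bidualHull {Z : Submodule 𝕜 E}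
    {Ψ : StrongDual 𝕜 (StrongDual 𝕜 (StrongDual 𝕜 E))}
    (hΨ : Ψ ∈ polarSubmodule 𝕜 (polarSubmodule 𝕜 (polarSubmodule 𝕜 Z))) :
    Ψ - inclusionInDoubleDual 𝕜 _ (Ψ.comp (inclusionInDoubleDual 𝕜 E)) ∈
      polarSubmodule 𝕜 (bidualHull Z) := by
  set Ω := Ψ - inclusionInDoubleDual 𝕜 _ (Ψ.comp (inclusionInDoubleDual 𝕜 E)) with hΩ
  have hΨZ : Ψ.comp (inclusionInDoubleDual 𝕜 E) ∈ polarSubmodule 𝕜 Z :=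
    (mem_polarSubmodule 𝕜 _ _).mpr fun x hx ↦ (mem_polarSubmodule 𝕜 _ _).mp hΨ _ <|
      (mem_polarSubmodule 𝕜 _ _).mpr fun f hf ↦ (mem_polarSubmodule 𝕜 _ _).mp hf x hx
  have hΩker : LinearMap.range (inclusionInDoubleDual 𝕜 E).toLinearMap ⊔
      polarSubmodule 𝕜 (polarSubmodule 𝕜 Z) ≤ LinearMap.ker Ω.toLinearMap := by
    refine sup_le ?_ fun v hv ↦ ?_
    · rintro _ ⟨x, rfl⟩
      simp [hΩ]
    · simp [hΩ, (mem_polarSubmodule 𝕜 _ _).mp hΨ v hv, (mem_polarSubmodule 𝕜 _ _).mp hv _ hΨZ]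
  exact (mem_polarSubmodule 𝕜 _ _).mpr
    (Submodule.topologicalClosure_minimal _ hΩker Ω.isClosed_ker)

end BidualHull

section Perturbation

variable {𝕜 Y : Type*} [RCLike 𝕜] [NormedAddCommGroup Y] [NormedSpace 𝕜 Y]

lemma exists_continuousLinearEquiv_hasSum_smulRight [CompleteSpace Y] {ι : Type*}
    {h : ι → StrongDual 𝕜 Y} {e : ι → Y} (hsum : Summable fun i ↦ ‖h i‖ * ‖e i‖)
    (hlt : ∑' i, ‖h i‖ * ‖e i‖ < 1) :
    ∃ S : Y ≃L[𝕜] Y, HasSum (fun i ↦ (h i).smulRight (e i)) (1 - (S : Y →L[𝕜] Y)) := by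
  have hnorm (i : ι) : ‖(h i).smulRight (e i)‖ = ‖h i‖ * ‖e i‖ :=
    ContinuousLinearMap.norm_smulRight_apply _ _
  simp only [← hnorm] at hsum hlt
  let K : Y →L[𝕜] Y := ∑' i, (h i).smulRight (e i)
  obtain ⟨S, hS⟩ := isUnit_one_sub_of_norm_lt_one ((norm_tsum_le_tsum_norm hsum).trans_lt hlt)
  have hSK : (ContinuousLinearEquiv.unitsEquiv 𝕜 Y S : Y →L[𝕜] Y) = 1 - K := hS
  have hK : 1 - (ContinuousLinearEquiv.unitsEquiv 𝕜 Y S : Y →L[𝕜] Y) = K := by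
    rw [hSK, sub_sub_cancel]
  exact ⟨ContinuousLinearEquiv.unitsEquiv 𝕜 Y S, hK ▸ hsum.of_norm.hasSum⟩

end Perturbation

section DenseWStarDerived

variable {X : Type*} [NormedAddCommGroup X] [NormedSpace ℝ X] {x : ℕ → X}
  {φ : ℕ → StrongDual ℝ X} {h : ℕ → StrongDual ℝ (StrongDual ℝ X)}
  {ψ : ℕ → StrongDual ℝ (StrongDual ℝ (StrongDual ℝ X))} {S : StrongDual ℝ X ≃L[ℝ] StrongDual ℝ X}

lemma apply_eq_apply_of_hasSum_smulRight (hφx : Biorthogonal φ x)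
    (hS : HasSum (fun m ↦ (h m).smulRight (φ m)) (1 - (S : StrongDual ℝ X →L[ℝ] StrongDual ℝ X)))
    (f : StrongDual ℝ X) (n : ℕ) : f (x n) - S f (x n) = h n f :=
  hφx.inclusionInDoubleDual.apply_hasSum (hS.mapL (ContinuousLinearMap.apply ℝ _ f)) n

lemma apply_comp_eq_neg_apply_of_hasSum_smulRight (hψh : Biorthogonal ψ h)
    (hS : HasSum (fun m ↦ (h m).smulRight (φ m)) (1 - (S : StrongDual ℝ X →L[ℝ] StrongDual ℝ X)))
    {w : StrongDual ℝ (StrongDual ℝ X)} {n : ℕ} (hw : ψ n w = 0) :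
    ψ n (w.comp (S : StrongDual ℝ X →L[ℝ] StrongDual ℝ X)) = -w (φ n) := by
  have hsum : HasSum (fun m ↦ w (φ m) • h m)
      (w - w.comp (S : StrongDual ℝ X →L[ℝ] StrongDual ℝ X)) := by
    convert hS.mapL (ContinuousLinearMap.compL ℝ _ _ ℝ w) using 1
    · ext m f
      simp [mul_comm]
    · ext f
      simp
  have := hψh.apply_hasSum hsum n
  rw [map_sub, hw, zero_sub] at this
  rw [← this, neg_neg]

lemma mem_wStarDerived_comap_of_eventually_apply_eq_zero (hφx : Biorthogonal φ x)
    (hψh : Biorthogonal ψ h)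
    (hψ : ∀ n, ψ n ∈ polarSubmodule ℝ (bidualHull (Submodule.span ℝ (Set.range x))))
    (hS : HasSum (fun m ↦ (h m).smulRight (φ m)) (1 - (S : StrongDual ℝ X →L[ℝ] StrongDual ℝ X)))
    {f : StrongDual ℝ X} (hf : ∀ᶠ m in atTop, S f (x m) = 0) :
    f ∈ wStarDerived (((polarSubmodule ℝ (Submodule.span ℝ (Set.range x))).comap
      S.toLinearMap : Submodule ℝ (StrongDual ℝ X)) : Set (StrongDual ℝ X)) := by
  simp only [mem_polarSubmodule] at hψ
  obtain ⟨N, hN⟩ := eventually_atTop.mp hf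
  let Φ := inclusionInDoubleDual ℝ (StrongDual ℝ X) f +
    ∑ m ∈ Finset.range N, S f (x m) • ψ m
  have hΦf : Φ.comp (inclusionInDoubleDual ℝ X) = f := by
    ext y
    simp [Φ, hψ _ _ (inclusionInDoubleDual_mem_bidualHull _ y)]
  rw [← hΦf]
  refine comp_inclusionInDoubleDual_mem_wStarDerived ((mem_polarSubmodule ℝ _ _).mpr fun v hv ↦ ?_)
  let w := v.comp (S.symm : StrongDual ℝ X →L[ℝ] StrongDual ℝ X)
  have hvw : v = w.comp (S : StrongDual ℝ X →L[ℝ] StrongDual ℝ X) := by ext; simp [w]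
  have hw : w ∈ polarSubmodule ℝ (polarSubmodule ℝ (Submodule.span ℝ (Set.range x))) :=
    (mem_polarSubmodule ℝ _ _).mpr fun g hg ↦
      (mem_polarSubmodule ℝ _ _).mp hv (S.symm g) (by simpa using hg)
  have hψv (m : ℕ) : ψ m v = -w (φ m) := hvw ▸ apply_comp_eq_neg_apply_of_hasSum_smulRight hψh hS
    (hψ m w (mem_bidualHull_of_mem_polarSubmodule hw))
  have hvf : v f = ∑ m ∈ Finset.range N, S f (x m) * w (φ m) := by
    rw [hvw]
    exact hφx.apply_eq_sum (fun m hm ↦ hN m (by simpa using hm)) hw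
  simp [Φ, hψv, hvf]

theorem exists_wStarDerived_ne_univ_and_dense (hφx : Biorthogonal φ x) (hφ : ∀ n, ‖φ n‖ = 1)
    (hdense : Dense {f : StrongDual ℝ X | ∀ᶠ m in atTop, f (x m) = 0})
    (hcodim : ¬ (bidualHull (Submodule.span ℝ (Set.range x))).CoFG) :
    ∃ A : Submodule ℝ (StrongDual ℝ X), wStarDerived (A : Set (StrongDual ℝ X)) ≠ Set.univ ∧
      Dense (wStarDerived (A : Set (StrongDual ℝ X))) := by
  obtain ⟨h, ψ, hh, hψ, hψh⟩ := exists_biorthogonal_polarSubmodule_norm_le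
    (Submodule.isClosed_topologicalClosure _) hcodim (a := fun n ↦ (1 / 4) ^ n / 4)
    fun n ↦ by positivity
  have hgeom : HasSum (fun n ↦ (1 / 4 : ℝ) ^ n / 4) ((1 - 1 / 4)⁻¹ / 4) :=
    (hasSum_geometric_of_lt_one (by norm_num) (by norm_num)).div_const 4
  have hhφ (n : ℕ) : ‖h n‖ * ‖φ n‖ ≤ (1 / 4) ^ n / 4 := by simpa [hφ] using hh n
  have hsum : Summable fun n ↦ ‖h n‖ * ‖φ n‖ :=
    .of_nonneg_of_le (fun n ↦ by positivity) hhφ hgeom.summable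
  obtain ⟨S, hS⟩ := exists_continuousLinearEquiv_hasSum_smulRight hsum <|
    (hasSum_le hhφ hsum.hasSum hgeom).trans_lt (by norm_num)
  refine ⟨(polarSubmodule ℝ (Submodule.span ℝ (Set.range x))).comap S.toLinearMap, ?_, ?_⟩
  · refine wStarDerived_ne_univ_of_forall_norm_apply_le hφx hφ fun g hg n ↦ ?_
    have hSg : S g (x n) = 0 := mem_polarSubmodule_span.mp hg (x n) (Set.mem_range_self n)
    rw [← sub_zero (g (x n)), ← hSg, apply_eq_apply_of_hasSum_smulRight hφx hS]
    refine (h n).le_of_opNorm_le ((hh n).trans ?_) g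
    exact div_le_self (by positivity) (by norm_num)
  · exact (hdense.preimage S.toHomeomorph.isOpenMap).mono fun f hf ↦
      mem_wStarDerived_comap_of_eventually_apply_eq_zero hφx hψh hψ hS hf

end DenseWStarDerived

section BidualHullCodimension

variable {𝕜 E : Type*} [RCLike 𝕜] [NormedAddCommGroup E] [NormedSpace 𝕜 E]

lemma not_coFG_bidualHull {W M : Submodule 𝕜 E} {h : ℕ → StrongDual 𝕜 (StrongDual 𝕜 E)}
    {Ψ : ℕ → StrongDual 𝕜 (StrongDual 𝕜 (StrongDual 𝕜 E))} (hΨh : Biorthogonal Ψ h)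
    (hh : ∀ n, h n ∈ polarSubmodule 𝕜 (polarSubmodule 𝕜 W))
    (hΨW : ∀ n, (Ψ n).comp (inclusionInDoubleDual 𝕜 E) ∈ polarSubmodule 𝕜 W)
    (hΨM : ∀ n, Ψ n ∈ polarSubmodule 𝕜 (polarSubmodule 𝕜 (polarSubmodule 𝕜 M))) :
    ¬ (bidualHull M).CoFG := by
  refine Biorthogonal.not_coFG (u := h) (fun i j ↦ ?_)
    fun n ↦ sub_inclusionInDoubleDual_comp_mem_polarSubmodule_bidualHull (hΨM n)
  simp [(mem_polarSubmodule 𝕜 _ _).mp (hh j) _ (hΨW i), hΨh i j]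

lemma not_coFG_bidualHull_of_eventually {y : ℕ → E} {M : Submodule 𝕜 E}
    {h : ℕ → StrongDual 𝕜 (StrongDual 𝕜 E)} {g : ℕ → ℕ → StrongDual 𝕜 E} {C : ℕ → ℝ}
    (hgC : ∀ k n, ‖g k n‖ ≤ C k)
    (hh : ∀ n, h n ∈ polarSubmodule 𝕜 (polarSubmodule 𝕜 (Submodule.span 𝕜 (Set.range y))))
    (hgh : ∀ k i, ∀ᶠ n in atTop, h i (g k n) = if k = i then 1 else 0)
    (hgy : ∀ k i, ∀ᶠ n in atTop, g k n (y i) = 0)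
    (hgM : ∀ k, ∀ᶠ n in atTop, g k n ∈ polarSubmodule 𝕜 M) :
    ¬ (bidualHull M).CoFG := by
  choose Ψ hΨ using fun k ↦ exists_bidual_apply_eq_of_eventually (𝕜 := 𝕜) (l := atTop) (hgC k)
  refine not_coFG_bidualHull (fun k i ↦ hΨ k _ _ (hgh k i)) hh (fun k ↦ ?_) fun k ↦ ?_
  · rw [mem_polarSubmodule_span, Set.forall_mem_range]
    exact fun i ↦ hΨ k _ _ (hgy k i)
  · refine (mem_polarSubmodule 𝕜 _ _).mpr fun F hF ↦ hΨ k F 0 ?_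
    filter_upwards [hgM k] with n hn using (mem_polarSubmodule 𝕜 _ _).mp hF _ hn

lemma exists_biorthogonal_seq_not_coFG_of_biorthogonal {Z : Submodule 𝕜 E}
    [TopologicalSpace.SeparableSpace (StrongDual 𝕜 Z)] {y : ℕ → E} (hyZ : ∀ n, y n ∈ Z)
    (hy : LinearIndependent 𝕜 y) {h : ℕ → StrongDual 𝕜 (StrongDual 𝕜 E)}
    {ψ : ℕ → StrongDual 𝕜 (StrongDual 𝕜 (StrongDual 𝕜 E))} (hψh : Biorthogonal ψ h)
    (hh : ∀ n, h n ∈ polarSubmodule 𝕜 (polarSubmodule 𝕜 (Submodule.span 𝕜 (Set.range y))))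
    (hψ : ∀ n x, ψ n (inclusionInDoubleDual 𝕜 E x) = 0) :
    ∃ (x : ℕ → E) (φ : ℕ → StrongDual 𝕜 E), Biorthogonal φ x ∧ (∀ n, ‖φ n‖ = 1) ∧
      Dense {f : StrongDual 𝕜 E | ∀ᶠ m in atTop, f (x m) = 0} ∧
      ¬ (bidualHull (Submodule.span 𝕜 (Set.range x))).CoFG := by
  classical
  choose g hgnorm hg using fun k ↦ exists_norm_lt_forall_mem_apply_eq (ψ k) (lt_add_one ‖ψ k‖)
  -- Agreement of `g k` with `ψ k` on `H n s` keeps `g k` biorthogonal to `h` and makes it vanish on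
  -- the `y i` with `i < n` and on the vectors `s` already chosen.
  let H (n : ℕ) (s : Finset E) : Finset (StrongDual 𝕜 (StrongDual 𝕜 E)) :=
    (Finset.range n).image h ∪
      ((Finset.range n).image y ∪ s).image (inclusionInDoubleDual 𝕜 E)
  obtain ⟨x, φ, -, hφx, hφ, hdense, hgx⟩ := exists_biorthogonal_seq_dense
    (Submodule.span_le.mpr (Set.range_subset_iff.mpr hyZ)) (not_finiteDimensional_span_range hy)
    fun n s ↦ (Finset.range n).image fun k ↦ g k (H n s)
  refine ⟨x, φ, hφx, hφ, hdense, not_coFG_bidualHull_of_eventually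
    (g := fun k n ↦ g k (H n ((Finset.range n).image x))) (fun k n ↦ (hgnorm k _).le) hh
    (fun k i ↦ ?_) (fun k i ↦ ?_) fun k ↦ ?_⟩
  · filter_upwards [eventually_gt_atTop i] with n hn
    rw [← hψh k i]
    exact hg k _ _ (Finset.mem_union_left _ (Finset.mem_image_of_mem h (Finset.mem_range.mpr hn)))
  · filter_upwards [eventually_gt_atTop i] with n hn
    exact (hg k _ _ (Finset.mem_union_right _ (Finset.mem_image_of_mem _ (Finset.mem_union_left _
      (Finset.mem_image_of_mem y (Finset.mem_range.mpr hn)))))).trans (hψ k _)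
  · filter_upwards [eventually_gt_atTop k] with n hn
    rw [mem_polarSubmodule_span, Set.forall_mem_range]
    intro m
    rcases lt_or_ge m n with hm | hm
    · exact (hg k _ _ (Finset.mem_union_right _ (Finset.mem_image_of_mem _
        (Finset.mem_union_right _ (Finset.mem_image_of_mem x (Finset.mem_range.mpr hm)))))).trans
          (hψ k _)
    · exact hgx n _ (Finset.mem_image_of_mem _ (Finset.mem_range.mpr hn)) m hm

theorem exists_biorthogonal_seq_not_coFG_bidualHull [CompleteSpace E] {Z : Submodule 𝕜 E}
    (hZ : ¬ FiniteDimensional 𝕜 Z) [TopologicalSpace.SeparableSpace (StrongDual 𝕜 Z)]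
    (hE : ¬ (LinearMap.range (inclusionInDoubleDual 𝕜 E).toLinearMap).CoFG) :
    ∃ (x : ℕ → E) (φ : ℕ → StrongDual 𝕜 E), Biorthogonal φ x ∧ (∀ n, ‖φ n‖ = 1) ∧
      Dense {f : StrongDual 𝕜 E | ∀ᶠ m in atTop, f (x m) = 0} ∧
      ¬ (bidualHull (Submodule.span 𝕜 (Set.range x))).CoFG := by
  classical
  obtain ⟨y, hyZ, hy⟩ := exists_linearIndependent_seq hZ
  rcases not_coFG_topologicalClosure_sup_or_not_finiteDimensional_map
    (Q := polarSubmodule 𝕜 (polarSubmodule 𝕜 (Submodule.span 𝕜 (Set.range y))))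
    isClosed_range_inclusionInDoubleDual hE with hhull | hmap
  · obtain ⟨x, φ, hxy, hφx, hφ, hdense, -⟩ := exists_biorthogonal_seq_dense
      (Submodule.span_le.mpr (Set.range_subset_iff.mpr hyZ)) (not_finiteDimensional_span_range hy)
      fun _ _ ↦ ∅
    exact ⟨x, φ, hφx, hφ, hdense, fun hx ↦ hhull <| hx.of_le <| bidualHull_mono <|
      Submodule.span_le.mpr (Set.range_subset_iff.mpr hxy)⟩
  · obtain ⟨h, ψ, hh, hψ, hψh⟩ :=
      exists_biorthogonal_polarSubmodule isClosed_range_inclusionInDoubleDual hmap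
    exact exists_biorthogonal_seq_not_coFG_of_biorthogonal hyZ hy hψh hh fun n x ↦
      (mem_polarSubmodule 𝕜 _ _).mp (hψ n) _ ⟨x, rfl⟩

end BidualHullCodimension

/-- If $X$ is a non-quasi-reflexive Banach space containing an infinite-dimensional closed
subspace with separable dual, then $X^*$ contains a linear subspace $A$ whose weak* derived
set is a proper norm-dense subset of $X^*$. -/
theorem stmt2 (X : Type*) [NormedAddCommGroup X] [NormedSpace ℝ X] [CompleteSpace X]
    (hnq : ¬ QuasiReflexive X)
    (hZ : ∃ Z : Submodule ℝ X, IsClosed (Z : Set X) ∧ ¬ FiniteDimensional ℝ Z ∧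
      TopologicalSpace.SeparableSpace (StrongDual ℝ Z)) :
    ∃ A : Submodule ℝ (StrongDual ℝ X),
      wStarDerived (A : Set (StrongDual ℝ X)) ≠ Set.univ ∧
      Dense (wStarDerived (A : Set (StrongDual ℝ X))) := by
  obtain ⟨Z, -, hZdim, hZsep⟩ := hZ
  obtain ⟨x, φ, hφx, hφ, hdense, hcodim⟩ := exists_biorthogonal_seq_not_coFG_bidualHull hZdim hnq
  exact exists_wStarDerived_ne_univ_and_dense hφx hφ hdense hcodim
end

section
/- Let X be a quasi-reflexive real Banach space and let A ⊆ X* be an absolutely convex subset (i.e., convex and balanced: λ·A ⊆ A for all real λ with |λ| ≤ 1). Then the weak* derived set A^(1) equals the weak* closure of A. -/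
open NormedSpace

/-!
Let `J : X → X**` be the canonical embedding and let `f` be in the weak* closure of `A`. Then `|f|`
is dominated by `x ↦ sup_{a ∈ A} |a x|`, so by Hahn–Banach `f ∘ J⁻¹` extends from `J(X)` to a linear
functional `φ` on `X**` that is dominated by the supremum over `A` on all of `X**`. As `J(X)` is
closed of finite codimension, `φ` is automatically continuous, and the domination puts it in the
weak* closure of `A` in `X***`. There every point `φ` of the closure of a convex `A ⊆ X*` is already
in the closure of `A ∩ r B` whenever `r > ‖φ‖`: otherwise a functional separates `r B` from the part
of `A` in some convex neighbourhood of `φ`, which contradicts `‖φ‖ < r`. Restricting back along `J`,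
which is weak*-continuous, gives a bounded net in `A` converging to `f`.
-/

section AbsConvex

variable {𝕜 E F : Type*} [SeminormedRing 𝕜] [PartialOrder 𝕜] [AddCommMonoid E] [Module 𝕜 E]
  [AddCommMonoid F] [Module 𝕜 F]

lemma absConvex_image_linearMap {s : Set E} (hs : AbsConvex 𝕜 s) (L : E →ₗ[𝕜] F) :
    AbsConvex 𝕜 (L '' s) := by
  refine ⟨fun c hc => ?_, hs.2.linear_image L⟩
  rintro _ ⟨_, ⟨a, ha, rfl⟩, rfl⟩
  exact ⟨c • a, hs.1 c hc (Set.smul_mem_smul_set ha), map_smul L c a⟩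

end AbsConvex

section HahnBanach

variable {𝕜 E : Type*} [NormedField 𝕜] [IsRCLikeNormedField 𝕜] [AddCommGroup E] [Module 𝕜 E]

/- Hahn–Banach on `V` alone extends `g` from `R ⊓ V` to `V`; the two functionals agree on `R ⊓ V`,
so they glue to `R ⊔ V`, and beyond that no bound is asked for. -/
theorem exists_extension_of_le_seminorm_on_submodule {R V : Submodule 𝕜 E} (g : Module.Dual 𝕜 R)
    {p : Seminorm 𝕜 V} (hp : ∀ (x : R) (v : V), (x : E) = v → ‖g x‖ ≤ p v) :
    ∃ φ : Module.Dual 𝕜 E, (∀ x : R, φ x = g x) ∧ ∀ v : V, ‖φ v‖ ≤ p v := by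
  obtain ⟨ψ, hψg, hψp⟩ := Module.Dual.exists_extension_of_le_seminorm (R.comap V.subtype)
    (g ∘ₗ V.subtype.restrict fun _ h => h) (p := p) fun x => hp _ _ rfl
  let onR : E →ₗ.[𝕜] 𝕜 := ⟨R, g⟩
  let onV : E →ₗ.[𝕜] 𝕜 := ⟨V, ψ⟩
  have agree : ∀ (x : onR.domain) (v : onV.domain), (x : E) = v → onR x = onV v := by
    rintro ⟨_, hx⟩ v rfl
    exact (hψg ⟨v, hx⟩).symm
  obtain ⟨φ, hφ⟩ := LinearMap.exists_extend (onR.sup onV agree).toFun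
  have hφR (x : R) : φ x = g x :=
    (LinearMap.congr_fun hφ ⟨x, le_sup_left (a := R) x.2⟩).trans
      ((LinearPMap.left_le_sup onR onV agree).2 (x := x) rfl).symm
  have hφV (v : V) : φ v = ψ v :=
    (LinearMap.congr_fun hφ ⟨v, le_sup_right (b := V) v.2⟩).trans
      ((LinearPMap.right_le_sup onR onV agree).2 (x := v) rfl).symm
  exact ⟨φ, hφR, fun v => (congrArg norm (hφV v)).trans_le (hψp v)⟩

end HahnBanach

section FiniteCodimension

variable {𝕜 X Y F : Type*} [NontriviallyNormedField 𝕜] [CompleteSpace 𝕜]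
  [AddCommGroup X] [Module 𝕜 X] [TopologicalSpace X]
  [AddCommGroup Y] [Module 𝕜 Y] [TopologicalSpace Y] [IsTopologicalAddGroup Y]
  [ContinuousSMul 𝕜 Y]
  [AddCommGroup F] [Module 𝕜 F] [TopologicalSpace F] [IsTopologicalAddGroup F]
  [ContinuousSMul 𝕜 F]

theorem continuous_of_continuous_domRestrict {R : Submodule 𝕜 Y} (hR : IsClosed (R : Set Y))
    [FiniteDimensional 𝕜 (Y ⧸ R)] {φ : Y →ₗ[𝕜] F} (hφ : Continuous (φ.domRestrict R)) :
    Continuous φ := by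
  obtain ⟨P, hP⟩ := Submodule.ClosedComplemented.of_finiteDimensional_quotient hR
  let φP : Y →ₗ[𝕜] F := φ.domRestrict R ∘ₗ P.toLinearMap
  have hφP : Continuous φP := hφ.comp P.continuous
  let q : Y ⧸ R →ₗ[𝕜] F := R.liftQ (φ - φP) fun x hx => by
    simp [φP, hP ⟨x, hx⟩]
  have hq : Continuous q := q.continuous_of_finiteDimensional
  have decomposition : ⇑φ = fun y => φP y + q (R.mkQ y) := by
    funext y
    simp [q]
  rw [decomposition]
  exact hφP.add (hq.comp continuous_quot_mk)

theorem continuous_of_continuous_comp_isClosedEmbedding {T : X →L[𝕜] Y}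
    (hT : Topology.IsClosedEmbedding T) [FiniteDimensional 𝕜 (Y ⧸ T.range)] {φ : Y →ₗ[𝕜] F}
    (hφ : Continuous (φ ∘ T)) : Continuous φ := by
  refine continuous_of_continuous_domRestrict (R := T.range) hT.isClosed_range ?_
  exact hT.isEmbedding.toHomeomorph.comp_continuous_iff'.1 hφ

end FiniteCodimension

section WeakDualPrecomp

variable {𝕜 E F : Type*} [CommSemiring 𝕜] [TopologicalSpace 𝕜] [ContinuousAdd 𝕜]
  [ContinuousConstSMul 𝕜 𝕜] [AddCommMonoid E] [Module 𝕜 E] [TopologicalSpace E]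
  [AddCommMonoid F] [Module 𝕜 F] [TopologicalSpace F]

/-- The adjoint `φ ↦ φ ∘ T` of a continuous linear map `T`, as a continuous linear map for the
weak* topologies. -/
noncomputable def weakDualPrecomp (T : E →L[𝕜] F) : WeakDual 𝕜 F →L[𝕜] WeakDual 𝕜 E where
  toFun φ := StrongDual.toWeakDual ((WeakDual.toStrongDual φ).comp T)
  map_add' _ _ := rfl
  map_smul' _ _ := rfl
  cont := WeakDual.continuous_of_continuous_eval fun x => WeakDual.eval_continuous (T x)

@[simp]
lemma weakDualPrecomp_apply (T : E →L[𝕜] F) (φ : WeakDual 𝕜 F) (x : E) :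
    weakDualPrecomp T φ x = φ (T x) :=
  rfl

end WeakDualPrecomp

section WeakDual

variable {E : Type*} [AddCommGroup E] [Module ℝ E] [TopologicalSpace E]

instance : LocallyConvexSpace ℝ (WeakDual ℝ E) :=
  inferInstanceAs (LocallyConvexSpace ℝ (WeakBilin (topDualPairing ℝ E)))

lemma exists_forall_apply_eq_eval (L : StrongDual ℝ (WeakDual ℝ E)) : ∃ x : E, ∀ f, L f = f x := by
  obtain ⟨x, rfl⟩ := LinearMap.dualEmbedding_surjective (topDualPairing ℝ E) L
  exact ⟨x, fun _ => rfl⟩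

lemma abs_apply_le_of_mem_closure {A : Set (WeakDual ℝ E)} {f : WeakDual ℝ E} (hf : f ∈ closure A)
    {x : E} {t : ℝ} (ht : ∀ a ∈ A, |a x| ≤ t) : |f x| ≤ t :=
  closure_minimal ht (isClosed_le (WeakDual.eval_continuous x).abs continuous_const) hf

theorem mem_closure_iff_forall_abs_apply_le [IsTopologicalAddGroup E] {A : Set (WeakDual ℝ E)}
    (hA : AbsConvex ℝ A) {f : WeakDual ℝ E} :
    f ∈ closure A ↔ ∀ (x : E) (t : ℝ), (∀ a ∈ A, |a x| ≤ t) → |f x| ≤ t := by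
  refine ⟨fun hf x t => abs_apply_le_of_mem_closure hf, fun h => ?_⟩
  by_contra hf
  obtain ⟨L, t, hLA, hLf⟩ := geometric_hahn_banach_closed_point hA.2.closure isClosed_closure hf
  obtain ⟨x, hx⟩ := exists_forall_apply_eq_eval L
  have hxA (a : WeakDual ℝ E) (ha : a ∈ A) : a x ≤ t := hx a ▸ (hLA a (subset_closure ha)).le
  have hxf : |f x| ≤ t := h x t fun a ha =>
    abs_le'.2 ⟨hxA a ha, hxA (-a) (hA.1.neg_mem_iff.2 ha)⟩
  exact (hLf.trans_le (hx f ▸ (le_abs_self (f x)).trans hxf)).false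

/-- The subspace of the points at which the functionals in `A` are uniformly bounded, i.e. the
span of the polar of `A`; the natural domain of `supSeminorm A`. -/
def boundedPoints (A : Set (WeakDual ℝ E)) : Submodule ℝ E where
  carrier := {x | ∃ t : ℝ, ∀ a ∈ A, |a x| ≤ t}
  zero_mem' := ⟨0, by simp⟩
  add_mem' := by
    rintro x y ⟨s, hs⟩ ⟨t, ht⟩
    refine ⟨s + t, fun a ha => ?_⟩
    rw [map_add]
    exact (abs_add_le _ _).trans (add_le_add (hs a ha) (ht a ha))
  smul_mem' := by
    rintro c x ⟨t, ht⟩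
    refine ⟨|c| * t, fun a ha => ?_⟩
    rw [map_smul, smul_eq_mul, abs_mul]
    exact mul_le_mul_of_nonneg_left (ht a ha) (abs_nonneg c)

/-- The seminorm `x ↦ sup_{a ∈ A} |a x|`, i.e. the gauge of the polar of `A`. It is restricted to
`boundedPoints A`, off which the supremum is infinite. -/
noncomputable def supSeminorm (A : Set (WeakDual ℝ E)) : Seminorm ℝ (boundedPoints A) :=
  ⨆ a : A, (normSeminorm ℝ ℝ).comp
    ((WeakDual.toStrongDual (a : WeakDual ℝ E)).toLinearMap.domRestrict (boundedPoints A))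

lemma bddAbove_range_abs_apply {A : Set (WeakDual ℝ E)} (x : boundedPoints A) :
    BddAbove (Set.range fun a : A => |(a : WeakDual ℝ E) x|) :=
  let ⟨t, ht⟩ := x.2
  ⟨t, Set.forall_mem_range.2 fun a => ht a a.2⟩

lemma supSeminorm_apply (A : Set (WeakDual ℝ E)) (x : boundedPoints A) :
    supSeminorm A x = ⨆ a : A, |(a : WeakDual ℝ E) x| :=
  Seminorm.iSup_apply (Seminorm.bddAbove_range_iff.2 bddAbove_range_abs_apply)

lemma abs_apply_le_supSeminorm {A : Set (WeakDual ℝ E)} {a : WeakDual ℝ E} (ha : a ∈ A)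
    (x : boundedPoints A) : |a x| ≤ supSeminorm A x :=
  supSeminorm_apply A x ▸ le_ciSup (bddAbove_range_abs_apply x) ⟨a, ha⟩

lemma supSeminorm_le {A : Set (WeakDual ℝ E)} (hA : A.Nonempty) {x : boundedPoints A} {t : ℝ}
    (ht : ∀ a ∈ A, |a x| ≤ t) : supSeminorm A x ≤ t := by
  have := hA.to_subtype
  rw [supSeminorm_apply]
  exact ciSup_le fun a => ht a a.2

variable {F : Type*} [AddCommGroup F] [Module ℝ F] [TopologicalSpace F] [IsTopologicalAddGroup F]
  [ContinuousSMul ℝ F]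

theorem weakDualPrecomp_image_closure {T : E →L[ℝ] F} (hT : Topology.IsClosedEmbedding T)
    [FiniteDimensional ℝ (F ⧸ T.range)] {A : Set (WeakDual ℝ F)} (hA : AbsConvex ℝ A) :
    weakDualPrecomp T '' closure A = closure (weakDualPrecomp T '' A) := by
  refine (image_closure_subset_closure_image (weakDualPrecomp T).continuous).antisymm fun f hf => ?_
  have nonempty : A.Nonempty := (closure_nonempty_iff.1 ⟨f, hf⟩).of_image
  let e := LinearEquiv.ofInjective T.toLinearMap hT.injective
  have dominated (y : T.range) (v : boundedPoints A) (hyv : (y : F) = v) :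
      ‖f (e.symm y)‖ ≤ supSeminorm A v := by
    refine abs_apply_le_of_mem_closure hf (Set.forall_mem_image.2 fun a ha => ?_)
    have hTy : T (e.symm y) = v := (congrArg Subtype.val (e.apply_symm_apply y)).trans hyv
    rw [weakDualPrecomp_apply, hTy]
    exact abs_apply_le_supSeminorm ha v
  obtain ⟨φ, hφf, hφA⟩ := exists_extension_of_le_seminorm_on_submodule
    ((WeakDual.toStrongDual f).toLinearMap ∘ₗ e.symm.toLinearMap) dominated
  have hφT (x : E) : φ (T x) = f x :=
    (hφf (e x)).trans (congrArg f (e.symm_apply_apply x))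
  have hφ : Continuous φ :=
    continuous_of_continuous_comp_isClosedEmbedding hT (by
      rw [show φ ∘ T = f from funext hφT]
      exact map_continuous f)
  refine ⟨StrongDual.toWeakDual ⟨φ, hφ⟩, ?_, DFunLike.ext _ _ hφT⟩
  exact (mem_closure_iff_forall_abs_apply_le hA).2 fun y t ht =>
    (hφA ⟨y, t, ht⟩).trans (supSeminorm_le nonempty ht)

end WeakDual

section WeakBidual

variable (W : Type*) [SeminormedAddCommGroup W] [NormedSpace ℝ W]

/-- The canonical map of a space into its bidual, the latter carrying the weak* topology. -/
noncomputable def inclusionInWeakBidual : W →L[ℝ] WeakDual ℝ (StrongDual ℝ W) :=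
  inclusionInDoubleDualWeak ℝ W ∘L toWeakSpaceCLM ℝ W

variable {W}

lemma weakDualPrecomp_inclusionInDoubleDual_image (A : Set (StrongDual ℝ W)) :
    weakDualPrecomp (inclusionInDoubleDual ℝ W) '' (inclusionInWeakBidual (StrongDual ℝ W) '' A) =
      StrongDual.toWeakDual '' A :=
  Set.image_image _ _ A

end WeakBidual

section Goldstine

variable {W : Type*} [NormedAddCommGroup W] [NormedSpace ℝ W]

lemma opNorm_le_div_of_forall_mem_ball_le {G : StrongDual ℝ W} {r c : ℝ} (hr : 0 < r)
    (h : ∀ z ∈ Metric.ball (0 : W) r, G z ≤ c) : ‖G‖ ≤ c / r := by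
  refine ContinuousLinearMap.opNorm_bound_of_ball_bound hr c G fun z hz => ?_
  have on_closedBall : ∀ z ∈ Metric.closedBall (0 : W) r, G z ≤ c := by
    rw [← closure_ball 0 hr.ne']
    exact closure_minimal h (isClosed_le G.continuous continuous_const)
  refine abs_le'.2 ⟨on_closedBall z hz, ?_⟩
  rw [← map_neg]
  exact on_closedBall (-z) (by simpa using hz)

theorem inter_ball_nonempty_of_mem_closure_image {C : Set W} (hC : Convex ℝ C)
    {φ : WeakDual ℝ (StrongDual ℝ W)} (hφ : φ ∈ closure (inclusionInWeakBidual W '' C)) {r : ℝ}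
    (hr : ‖WeakDual.toStrongDual φ‖ < r) : (C ∩ Metric.ball 0 r).Nonempty := by
  rw [Set.inter_comm, ← Set.not_disjoint_iff_nonempty_inter]
  intro disjoint
  have r_pos : 0 < r := (norm_nonneg (WeakDual.toStrongDual φ)).trans_lt hr
  obtain ⟨G, u, hGball, hGC⟩ :=
    geometric_hahn_banach_open (convex_ball (0 : W) r) Metric.isOpen_ball hC disjoint
  have u_pos : 0 < u := by simpa using hGball 0 (Metric.mem_ball_self r_pos)
  have u_le : u ≤ φ G :=
    closure_minimal (t := {ψ : WeakDual ℝ (StrongDual ℝ W) | u ≤ ψ G})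
      (Set.forall_mem_image.2 hGC) (isClosed_le continuous_const (WeakDual.eval_continuous G)) hφ
  have lt_u : φ G < u := calc
    φ G ≤ ‖WeakDual.toStrongDual φ‖ * ‖G‖ :=
      (le_abs_self _).trans ((WeakDual.toStrongDual φ).le_opNorm G)
    _ ≤ ‖WeakDual.toStrongDual φ‖ * (u / r) := by
      gcongr
      exact opNorm_le_div_of_forall_mem_ball_le r_pos fun z hz => (hGball z hz).le
    _ < r * (u / r) := by gcongr
    _ = u := mul_div_cancel₀ u r_pos.ne'
  exact (u_le.trans_lt lt_u).false

theorem mem_closure_image_inter_ball {A : Set W} (hA : Convex ℝ A)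
    {φ : WeakDual ℝ (StrongDual ℝ W)} (hφ : φ ∈ closure (inclusionInWeakBidual W '' A)) {r : ℝ}
    (hr : ‖WeakDual.toStrongDual φ‖ < r) :
    φ ∈ closure (inclusionInWeakBidual W '' (A ∩ Metric.ball 0 r)) := by
  refine (mem_closure_iff_nhds_basis (LocallyConvexSpace.convex_basis (𝕜 := ℝ) φ)).2 ?_
  rintro U ⟨hU, hUconv⟩
  have near : φ ∈ closure (inclusionInWeakBidual W '' (A ∩ inclusionInWeakBidual W ⁻¹' U)) := by
    rwa [Set.image_inter_preimage, mem_closure_iff_nhdsWithin_neBot,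
      nhdsWithin_inter_of_mem' (mem_nhdsWithin_of_mem_nhds hU), ← mem_closure_iff_nhdsWithin_neBot]
  obtain ⟨z, ⟨hzA, hzU⟩, hzr⟩ := inter_ball_nonempty_of_mem_closure_image
    (hA.inter (hUconv.linear_preimage (inclusionInWeakBidual W).toLinearMap)) near hr
  exact ⟨_, ⟨z, ⟨hzA, hzr⟩, rfl⟩, hzU⟩

lemma exists_nat_mem_closure_image_inter_ball {A : Set W} (hA : Convex ℝ A)
    {φ : WeakDual ℝ (StrongDual ℝ W)} (hφ : φ ∈ closure (inclusionInWeakBidual W '' A)) :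
    ∃ n : ℕ, φ ∈ closure (inclusionInWeakBidual W '' (A ∩ Metric.ball 0 n)) :=
  let ⟨n, hn⟩ := exists_nat_gt ‖WeakDual.toStrongDual φ‖
  ⟨n, mem_closure_image_inter_ball hA hφ hn⟩

end Goldstine

/-- If $X$ is quasi-reflexive and $A \subset X^*$ is absolutely convex (convex and
balanced), then the weak* derived set of $A$ equals the weak* closure of $A$. -/
theorem stmt4 (X : Type*) [NormedAddCommGroup X] [NormedSpace ℝ X] [CompleteSpace X]
    (hq : QuasiReflexive X) (A : Set (StrongDual ℝ X))
    (hconv : Convex ℝ A) (hbal : Balanced ℝ A) :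
    wStarDerived A = wStarClosure A := by
  refine Set.Subset.antisymm (Set.iUnion_subset fun n =>
    closure_mono (X := WeakDual ℝ X) (Set.image_mono Set.inter_subset_left)) fun f hf => ?_
  have : FiniteDimensional ℝ (_ ⧸ (inclusionInDoubleDual ℝ X).range) := hq
  have isometry : Isometry (inclusionInDoubleDual ℝ X) := (inclusionInDoubleDualLi ℝ).isometry
  have hA : AbsConvex ℝ (inclusionInWeakBidual (StrongDual ℝ X) '' A) :=
    absConvex_image_linearMap ⟨hbal, hconv⟩ (inclusionInWeakBidual _).toLinearMap
  obtain ⟨φ, hφ, hφf⟩ : StrongDual.toWeakDual f ∈ weakDualPrecomp (inclusionInDoubleDual ℝ X) ''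
      closure (inclusionInWeakBidual (StrongDual ℝ X) '' A) := by
    rw [weakDualPrecomp_image_closure isometry.isClosedEmbedding hA,
      weakDualPrecomp_inclusionInDoubleDual_image]
    exact hf
  obtain ⟨n, hn⟩ := exists_nat_mem_closure_image_inter_ball hconv hφ
  have hfn := image_closure_subset_closure_image (weakDualPrecomp _).continuous
    ⟨φ, hn, hφf⟩
  rw [weakDualPrecomp_inclusionInDoubleDual_image] at hfn
  refine Set.mem_iUnion.2 ⟨n, closure_mono (X := WeakDual ℝ X) (Set.image_mono ?_) hfn⟩
  exact Set.inter_subset_inter_right A fun g hg => (mem_ball_zero_iff.1 hg).le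
end

section
/- Let Ω be a directed set, n ∈ ℕ, and let m : Ω → ℝ^n (with any fixed norm on ℝ^n) be such that limsup_α ‖m(α)‖ = ∞, meaning: for every M > 0 and every α ∈ Ω there exists β ≽ α with ‖m(β)‖ > M. Then there exist a constant 0 < C < ∞ and α' ∈ Ω such that for every α₀ ≽ α' and every ε ∈ (0,1) there is a finitely supported function a : Ω → ℝ whose support is contained in {α₀} ∪ {α ∈ Ω : α ≻ α₀}, satisfying ∑_α |a(α)| = 1, a(α₀) = 1 − ε, and ‖∑_α a(α)·m(α)‖ ≤ C. -/
/-!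
Call a functional *eventually bounded* if it is bounded along `m` on some tail `{α | α > α₀}`.
The spaces of functionals bounded on a given tail increase with `α₀`, so in finite dimension they
are all equal to one space `F` from some index on. By Banach-Steinhaus on `F`, there is `R` with
`|f (m α)| ≤ R ‖f‖` for all `f ∈ F` and all later `α`. Hence no functional can separate
`-(1 - ε) • m α₀` by more than `R` from the set of combinations of `m` over `{α | α > α₀}` with
`ℓ¹` norm at most `ε`: such a functional would be bounded on the tail. By Hahn-Banach the distance
is at most `R`, so some such combination cancels `(1 - ε) • m α₀` up to `R + 1`. Finally,
unboundedness of `m` rules out maximal indices, so tails are infinite and there is a nontrivial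
linear relation between values of `m` at unused indices of the tail; adding a multiple of it brings
the `ℓ¹` norm up to exactly `ε`.
-/

section Order

lemma exists_forall_ge_apply_eq_of_monotone {α β : Type*} [Preorder α] [Nonempty α]
    [PartialOrder β] [WellFoundedGT β] {f : α → β} (hf : Monotone f) :
    ∃ a, ∀ b, a ≤ b → f b = f a := by
  obtain ⟨_, ⟨a, rfl⟩, ha⟩ := wellFounded_gt.has_min (Set.range f) (Set.range_nonempty f)
  exact ⟨a, fun b hab => ((hf hab).eq_of_not_lt (ha _ ⟨b, rfl⟩)).symm⟩

lemma noMaxOrder_of_forall_exists_ge_apply_lt {α β : Type*} [PartialOrder α] [Preorder β]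
    {f : α → β} (h : ∀ a, ∃ b, a ≤ b ∧ f a < f b) : NoMaxOrder α where
  exists_gt a := by
    obtain ⟨b, hab, hf⟩ := h a
    exact ⟨b, hab.lt_of_ne fun hb => hf.ne (congrArg f hb)⟩

end Order

section L1Seminorm

/-- The `ℓ¹` norm `∑ i, ‖b i‖` of a finitely supported family of scalars, bundled as a seminorm so
that its balls are available as convex sets. -/
noncomputable def l1Seminorm (𝕜 ι : Type*) [NormedField 𝕜] : Seminorm 𝕜 (ι →₀ 𝕜) :=
  Seminorm.of (fun b => b.sum fun _ x => ‖x‖)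
    (fun b c => by
      classical
      rw [Finsupp.sum_of_support_subset _ Finsupp.support_add _ fun _ _ => norm_zero,
        Finsupp.sum_of_support_subset b Finset.subset_union_left _ fun _ _ => norm_zero,
        Finsupp.sum_of_support_subset c Finset.subset_union_right _ fun _ _ => norm_zero,
        ← Finset.sum_add_distrib]
      exact Finset.sum_le_sum fun i _ => norm_add_le (b i) (c i))
    (fun k b => by
      rw [Finsupp.sum_of_support_subset _ Finsupp.support_smul _ fun _ _ => norm_zero,
        Finsupp.sum, Finset.mul_sum]
      exact Finset.sum_congr rfl fun i _ => norm_mul k (b i))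

variable {𝕜 ι : Type*} [NormedField 𝕜]

lemma l1Seminorm_apply (b : ι →₀ 𝕜) : l1Seminorm 𝕜 ι b = ∑ i ∈ b.support, ‖b i‖ := rfl

lemma l1Seminorm_single (i : ι) (x : 𝕜) : l1Seminorm 𝕜 ι (Finsupp.single i x) = ‖x‖ :=
  Finsupp.sum_single_index norm_zero

lemma l1Seminorm_add_of_disjoint {b c : ι →₀ 𝕜} (h : Disjoint b.support c.support) :
    l1Seminorm 𝕜 ι (b + c) = l1Seminorm 𝕜 ι b + l1Seminorm 𝕜 ι c :=
  Finsupp.sum_add_index_of_disjoint h _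

lemma l1Seminorm_pos {b : ι →₀ 𝕜} (hb : b ≠ 0) : 0 < l1Seminorm 𝕜 ι b :=
  Finset.sum_pos (fun _ hi => norm_pos_iff.mpr (Finsupp.mem_support_iff.mp hi))
    (Finsupp.support_nonempty_iff.mpr hb)

end L1Seminorm

section LinearRelation

lemma exists_mem_supported_linearCombination_eq_zero {R M ι : Type*} [Ring R] [Nontrivial R]
    [AddCommGroup M] [Module R M] [IsNoetherian R M] (v : ι → M) {s : Set ι} (hs : s.Infinite) :
    ∃ c ∈ Finsupp.supported R R s, Finsupp.linearCombination R v c = 0 ∧ c ≠ 0 := by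
  by_contra! h
  have hli : LinearIndepOn R v s := linearIndepOn_iff.mpr h
  exact hs (Set.finite_coe_iff.mp (LinearIndependent.finite_of_isNoetherian hli))

lemma exists_mem_supported_l1Seminorm_eq {𝕜 E ι : Type*} [RCLike 𝕜] [AddCommGroup E] [Module 𝕜 E]
    [FiniteDimensional 𝕜 E] (v : ι → E) {s : Set ι} (hs : s.Infinite) {b : ι →₀ 𝕜}
    (hb : b ∈ Finsupp.supported 𝕜 𝕜 s) {r : ℝ} (hr : l1Seminorm 𝕜 ι b ≤ r) :
    ∃ d ∈ Finsupp.supported 𝕜 𝕜 s, l1Seminorm 𝕜 ι d = r ∧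
      Finsupp.linearCombination 𝕜 v d = Finsupp.linearCombination 𝕜 v b := by
  obtain ⟨c, hc, hvc, hc0⟩ :=
    exists_mem_supported_linearCombination_eq_zero (R := 𝕜) v (hs.sdiff b.support.finite_toSet)
  have hcpos : 0 < l1Seminorm 𝕜 ι c := l1Seminorm_pos hc0
  set k : ℝ := (r - l1Seminorm 𝕜 ι b) / l1Seminorm 𝕜 ι c with hk
  have hk0 : 0 ≤ k := div_nonneg (sub_nonneg.mpr hr) hcpos.le
  have hdisj : Disjoint b.support ((k : 𝕜) • c).support :=
    Finset.disjoint_right.mpr fun _ hi => (hc (Finsupp.support_smul hi)).2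
  refine ⟨b + (k : 𝕜) • c, add_mem hb (Submodule.smul_mem _ _ fun _ hi => (hc hi).1), ?_, ?_⟩
  · rw [l1Seminorm_add_of_disjoint hdisj, map_smul_eq_mul, RCLike.norm_of_nonneg hk0, hk,
      div_mul_cancel₀ _ hcpos.ne', add_sub_cancel]
  · rw [map_add, map_smul, hvc, smul_zero, add_zero]

end LinearRelation

section HahnBanach

variable {E : Type*} [NormedAddCommGroup E] [NormedSpace ℝ E]

lemma apply_add_mul_norm_le_of_forall_mem_ball {f : StrongDual ℝ E} {x : E} {r u : ℝ} (hr : 0 < r)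
    (h : ∀ y ∈ Metric.ball x r, f y ≤ u) : f x + r * ‖f‖ ≤ u := by
  have hle : ∀ z ∈ Metric.ball (0 : E) 1, f z ≤ (u - f x) / r := fun z hz => by
    have hmem : x + r • z ∈ Metric.ball x r := by
      rw [mem_ball_iff_norm, add_sub_cancel_left, norm_smul, Real.norm_of_nonneg hr.le]
      exact mul_lt_of_lt_one_right hr (mem_ball_zero_iff.mp hz)
    have hfz := h _ hmem
    rw [map_add, map_smul, smul_eq_mul] at hfz
    rw [le_div_iff₀' hr]
    linarith
  have hnorm : ‖f‖ ≤ (u - f x) / r := by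
    rw [← f.sSup_unit_ball_eq_norm]
    refine csSup_le ((Metric.nonempty_ball.mpr one_pos).image _) ?_
    rintro _ ⟨z, hz, rfl⟩
    refine abs_le'.mpr ⟨hle z hz, ?_⟩
    rw [← map_neg]
    exact hle (-z) (by simpa using hz)
  rw [le_div_iff₀' hr] at hnorm
  linarith

lemma infDist_le_of_forall_strongDual {s : Set E} (hs : Convex ℝ s) {x : E} {C : ℝ} (hC : 0 ≤ C)
    (h : ∀ (f : StrongDual ℝ E) (u : ℝ), (∀ y ∈ s, f y ≤ u) → f x ≤ u + C * ‖f‖) :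
    Metric.infDist x s ≤ C := by
  by_contra! hlt
  have hpos : 0 < Metric.infDist x s := hC.trans_lt hlt
  obtain ⟨f, u, hball, hsu⟩ := geometric_hahn_banach_open (convex_ball x (Metric.infDist x s))
    Metric.isOpen_ball hs Metric.disjoint_ball_infDist
  have hupper : f x + Metric.infDist x s * ‖f‖ ≤ u :=
    apply_add_mul_norm_le_of_forall_mem_ball hpos fun y hy => (hball y hy).le
  have hlower : u ≤ f x + C * ‖f‖ := by
    have := h (-f) (-u) fun y hy => neg_le_neg (hsu y hy)
    rw [neg_apply, norm_neg] at this
    linarith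
  have hfx : f x < u := hball x (Metric.mem_ball_self hpos)
  nlinarith [norm_nonneg f]

lemma infDist_linearCombination_image_le {ι : Type*} (v : ι → E) (s : Set ι) {x : E} {C r : ℝ}
    (hC : 0 ≤ C) (hr : 0 < r)
    (h : ∀ f : StrongDual ℝ E, (∃ M, ∀ i ∈ s, |f (v i)| ≤ M) → f x ≤ C * ‖f‖) :
    Metric.infDist x (Finsupp.linearCombination ℝ v ''
      (Finsupp.supported ℝ ℝ s ∩ (l1Seminorm ℝ ι).closedBall 0 r)) ≤ C := by
  refine infDist_le_of_forall_strongDual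
    (((Submodule.convex _).inter ((l1Seminorm ℝ ι).convex_closedBall 0 r)).linear_image _) hC ?_
  intro f u hu
  have hu0 : 0 ≤ u := by
    simpa using hu 0 ⟨0, ⟨zero_mem _, (l1Seminorm ℝ ι).mem_closedBall_self hr.le⟩, map_zero _⟩
  have hsingle : ∀ i ∈ s, ∀ k : ℝ, |k| ≤ r → k * f (v i) ≤ u := fun i hi k hk => by
    have hmem : Finsupp.single i k ∈ (l1Seminorm ℝ ι).closedBall 0 r := by
      rwa [Seminorm.mem_closedBall_zero, l1Seminorm_single]
    simpa using hu _ ⟨_, ⟨Finsupp.single_mem_supported ℝ k hi, hmem⟩, rfl⟩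
  have hbdd : ∀ i ∈ s, |f (v i)| ≤ u / r := fun i hi => by
    have hpos := hsingle i hi r (abs_of_pos hr).le
    have hneg := hsingle i hi (-r) (by rw [abs_neg, abs_of_pos hr])
    refine abs_le'.mpr ⟨(le_div_iff₀' hr).mpr hpos, (le_div_iff₀' hr).mpr ?_⟩
    rwa [mul_neg, ← neg_mul]
  linarith [h f ⟨u / r, hbdd⟩]

end HahnBanach

section BoundedFunctionals

lemma exists_forall_mem_norm_apply_le_of_pointwise_bounded {𝕜 E F ι : Type*}
    [NontriviallyNormedField 𝕜] [SeminormedAddCommGroup E] [NormedSpace 𝕜 E]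
    [SeminormedAddCommGroup F] [NormedSpace 𝕜 F] (p : Submodule 𝕜 E) [CompleteSpace p]
    (g : ι → E →L[𝕜] F) (h : ∀ x ∈ p, ∃ M, ∀ i, ‖g i x‖ ≤ M) :
    ∃ R, ∀ x ∈ p, ∀ i, ‖g i x‖ ≤ R * ‖x‖ := by
  obtain ⟨R, hR⟩ := banach_steinhaus (g := fun i => (g i).comp p.subtypeL) fun x => h x x.2
  exact ⟨R, fun x hx i => ((g i).comp p.subtypeL).le_of_opNorm_le (hR i) ⟨x, hx⟩⟩

/-- The subspace of continuous linear functionals that are bounded on the set `t`. -/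
def boundedFunctionals (𝕜 : Type*) {E : Type*} [NontriviallyNormedField 𝕜]
    [SeminormedAddCommGroup E] [NormedSpace 𝕜 E] (t : Set E) : Submodule 𝕜 (StrongDual 𝕜 E) where
  carrier := {f | ∃ M, ∀ x ∈ t, ‖f x‖ ≤ M}
  zero_mem' := ⟨0, fun _ _ => norm_zero.le⟩
  add_mem' := by
    rintro f g ⟨M, hM⟩ ⟨N, hN⟩
    exact ⟨M + N, fun x hx => norm_add_le_of_le (hM x hx) (hN x hx)⟩
  smul_mem' := by
    rintro c f ⟨M, hM⟩
    exact ⟨‖c‖ * M, fun x hx =>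
      (norm_smul_le c (f x)).trans (mul_le_mul_of_nonneg_left (hM x hx) (norm_nonneg c))⟩

variable {𝕜 E : Type*} [NontriviallyNormedField 𝕜] [SeminormedAddCommGroup E] [NormedSpace 𝕜 E]

lemma boundedFunctionals_antitone : Antitone (boundedFunctionals 𝕜 : Set E → _) :=
  fun _ _ hst _ ⟨M, hM⟩ => ⟨M, fun x hx => hM x (hst hx)⟩

lemma exists_forall_mem_boundedFunctionals_norm_apply_le (t : Set E)
    [CompleteSpace (boundedFunctionals 𝕜 t)] :
    ∃ R, ∀ f ∈ boundedFunctionals 𝕜 t, ∀ x ∈ t, ‖f x‖ ≤ R * ‖f‖ := by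
  obtain ⟨R, hR⟩ := exists_forall_mem_norm_apply_le_of_pointwise_bounded
    (boundedFunctionals 𝕜 t) (fun x : t => ContinuousLinearMap.apply 𝕜 𝕜 (x : E))
    fun _ ⟨M, hM⟩ => ⟨M, fun x => hM x x.2⟩
  exact ⟨R, fun f hf x hx => hR f hf ⟨x, hx⟩⟩

end BoundedFunctionals

lemma exists_forall_ge_norm_apply_le {𝕜 E Ω : Type*} [NontriviallyNormedField 𝕜] [CompleteSpace 𝕜]
    [NormedAddCommGroup E] [NormedSpace 𝕜 E] [FiniteDimensional 𝕜 E] [Preorder Ω] [Nonempty Ω]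
    [NoMaxOrder Ω] (m : Ω → E) :
    ∃ (R : ℝ) (α' : Ω), ∀ α₀, α' ≤ α₀ → ∀ f ∈ boundedFunctionals 𝕜 (m '' Set.Ioi α₀),
      ‖f (m α₀)‖ ≤ R * ‖f‖ := by
  have hmono : Monotone fun α => boundedFunctionals 𝕜 (m '' Set.Ioi α) :=
    fun _ _ h => boundedFunctionals_antitone (Set.image_mono (Set.Ioi_subset_Ioi h))
  obtain ⟨α₁, hα₁⟩ := exists_forall_ge_apply_eq_of_monotone hmono
  have := (boundedFunctionals 𝕜 (m '' Set.Ioi α₁)).complete_of_finiteDimensional.completeSpace_coe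
  obtain ⟨R, hR⟩ := exists_forall_mem_boundedFunctionals_norm_apply_le (𝕜 := 𝕜) (m '' Set.Ioi α₁)
  obtain ⟨α', hα'⟩ := exists_gt α₁
  refine ⟨R, α', fun α₀ hα₀ f hf => ?_⟩
  have hlt : α₁ < α₀ := hα'.trans_le hα₀
  exact hR f (hα₁ α₀ hlt.le ▸ hf) _ ⟨α₀, hlt, rfl⟩

lemma exists_mem_supported_norm_smul_add_linearCombination_lt {Ω E : Type*} [Preorder Ω]
    [Nonempty Ω] [NoMaxOrder Ω] [NormedAddCommGroup E] [NormedSpace ℝ E] [FiniteDimensional ℝ E]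
    (m : Ω → E) :
    ∃ (C : ℝ) (α' : Ω), 0 < C ∧ ∀ α₀, α' ≤ α₀ → ∀ t ε : ℝ, |t| ≤ 1 → 0 < ε →
      ∃ b ∈ Finsupp.supported ℝ ℝ (Set.Ioi α₀), l1Seminorm ℝ Ω b = ε ∧
        ‖t • m α₀ + Finsupp.linearCombination ℝ m b‖ < C := by
  obtain ⟨R, α', hR⟩ := exists_forall_ge_norm_apply_le (𝕜 := ℝ) m
  refine ⟨|R| + 1, α', by positivity, fun α₀ hα₀ t ε ht hε => ?_⟩
  have hdist := infDist_linearCombination_image_le m (Set.Ioi α₀) (x := -(t • m α₀))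
    (abs_nonneg R) hε fun f ⟨M, hM⟩ => calc
      f (-(t • m α₀)) ≤ |t| * |f (m α₀)| := by
        rw [map_neg, map_smul, smul_eq_mul, ← abs_mul]
        exact neg_le_abs _
      _ ≤ |f (m α₀)| := mul_le_of_le_one_left (abs_nonneg _) ht
      _ ≤ R * ‖f‖ := hR α₀ hα₀ f ⟨M, Set.forall_mem_image.mpr hM⟩
      _ ≤ |R| * ‖f‖ := by gcongr; exact le_abs_self R
  have hne : (Finsupp.supported ℝ ℝ (Set.Ioi α₀) ∩
      (l1Seminorm ℝ Ω).closedBall 0 ε : Set (Ω →₀ ℝ)).Nonempty :=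
    ⟨0, zero_mem _, Seminorm.mem_closedBall_self _ hε.le⟩
  obtain ⟨_, ⟨b, ⟨hbs, hbε⟩, rfl⟩, hb⟩ :=
    (Metric.infDist_lt_iff (hne.image _)).mp (hdist.trans_lt (lt_add_one |R|))
  obtain ⟨d, hds, hdε, hd⟩ := exists_mem_supported_l1Seminorm_eq m (Set.Ioi_infinite α₀) hbs
    ((Seminorm.mem_closedBall_zero _).mp hbε)
  refine ⟨d, hds, hdε, ?_⟩
  rwa [hd, ← norm_neg, neg_add, ← sub_eq_add_neg, ← dist_eq_norm]

theorem stmt7_general {Ω : Type*} [Preorder Ω] [Nonempty Ω] [NoMaxOrder Ω]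
    {E : Type*} [NormedAddCommGroup E] [NormedSpace ℝ E] [FiniteDimensional ℝ E] (m : Ω → E) :
    ∃ (C : ℝ) (α' : Ω), 0 < C ∧
      ∀ α₀ : Ω, α' ≤ α₀ → ∀ ε : ℝ, 0 < ε → ε ≤ 1 →
        ∃ a : Ω →₀ ℝ,
          (↑a.support ⊆ insert α₀ {α : Ω | α₀ < α}) ∧
          (∑ α ∈ a.support, |a α| = 1) ∧
          a α₀ = 1 - ε ∧
          ‖∑ α ∈ a.support, a α • m α‖ ≤ C := by
  classical
  obtain ⟨C, α', hC, h⟩ := exists_mem_supported_norm_smul_add_linearCombination_lt m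
  refine ⟨C, α', hC, fun α₀ hα₀ ε hε0 hε1 => ?_⟩
  have habs : |1 - ε| = 1 - ε := abs_of_nonneg (sub_nonneg.mpr hε1)
  obtain ⟨b, hbs, hbε, hb⟩ :=
    h α₀ hα₀ (1 - ε) ε (habs.trans_le (sub_le_self 1 hε0.le)) hε0
  have hnot : α₀ ∉ b.support := fun hmem => lt_irrefl α₀ (hbs hmem)
  have hdisj : Disjoint (Finsupp.single α₀ (1 - ε)).support b.support :=
    (Finset.disjoint_singleton_left.mpr hnot).mono_left Finsupp.support_single_subset
  refine ⟨Finsupp.single α₀ (1 - ε) + b, fun i hi => ?_, ?_, ?_, ?_⟩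
  · exact (Finset.mem_union.mp (Finsupp.support_add hi)).imp
      (fun hi => Finset.mem_singleton.mp (Finsupp.support_single_subset hi)) (fun hi => hbs hi)
  · calc _ = l1Seminorm ℝ Ω (Finsupp.single α₀ (1 - ε) + b) := (l1Seminorm_apply _).symm
      _ = |1 - ε| + ε := by
        rw [l1Seminorm_add_of_disjoint hdisj, l1Seminorm_single, hbε, Real.norm_eq_abs]
      _ = 1 := by rw [habs, sub_add_cancel]
  · rw [Finsupp.add_apply, Finsupp.single_eq_same, Finsupp.notMem_support_iff.mp hnot, add_zero]
  · calc _ = ‖Finsupp.linearCombination ℝ m (Finsupp.single α₀ (1 - ε) + b)‖ := rfl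
      _ = ‖(1 - ε) • m α₀ + Finsupp.linearCombination ℝ m b‖ := by
        rw [map_add, Finsupp.linearCombination_single]
      _ ≤ C := hb.le

/-- Convex-geometry lemma: if a net `m` in a finite-dimensional real normed space
(ℝⁿ with an arbitrary fixed norm) satisfies `limsup ‖m(α)‖ = ∞`, then there are `C > 0`
and `α'` such that for every `α₀ ≽ α'` and `ε ∈ (0,1)` there is a finitely supported
family of coefficients `a`, supported on `{α₀} ∪ {α : α ≻ α₀}`, with `∑|a(α)| = 1`,
`a(α₀) = 1 - ε` and `‖∑ a(α) m(α)‖ ≤ C`. -/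
theorem stmt7 {Ω : Type*} [PartialOrder Ω] [Nonempty Ω]
    (hdir : ∀ a b : Ω, ∃ c : Ω, a ≤ c ∧ b ≤ c)
    {E : Type*} [NormedAddCommGroup E] [NormedSpace ℝ E] [FiniteDimensional ℝ E]
    (m : Ω → E)
    (hlim : ∀ M : ℝ, 0 < M → ∀ α : Ω, ∃ β : Ω, α ≤ β ∧ M < ‖m β‖) :
    ∃ (C : ℝ) (α' : Ω), 0 < C ∧
      ∀ α₀ : Ω, α' ≤ α₀ → ∀ ε : ℝ, 0 < ε → ε < 1 →
        ∃ a : Ω →₀ ℝ,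
          (↑a.support ⊆ insert α₀ {α : Ω | α₀ < α}) ∧
          (∑ α ∈ a.support, |a α| = 1) ∧
          a α₀ = 1 - ε ∧
          ‖∑ α ∈ a.support, a α • m α‖ ≤ C := by
  have : NoMaxOrder Ω := noMaxOrder_of_forall_exists_ge_apply_lt (f := fun α => ‖m α‖) fun α => by
    obtain ⟨β, hαβ, hβ⟩ := hlim (‖m α‖ + 1) (by positivity) α
    exact ⟨β, hαβ, (lt_add_one _).trans hβ⟩
  obtain ⟨C, α', hC, h⟩ := stmt7_general m
  exact ⟨C, α', hC, fun α₀ hα₀ ε hε0 hε1 => h α₀ hα₀ ε hε0 hε1.le⟩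
end
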